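/- arXiv:2411.07275 — 2 statements merged into one kernel-verified Lean document; each statement's English description precedes it below -/
import Mathlib

section
/- The equivalence problem for erasing pattern languages with regular constraints is undecidable: for the binary alphabet Σ = {0,#} there is no algorithm that, given two patterns with regular constraints (α, r_α) and (β, r_β), decides whether L_E(α, r_α) = L_E(β, r_β). Formally, the predicate on encoded input pairs ((α, r_α), (β, r_β)) — where α, β are finite words over Σ ∪ ℕ and r_α, r_β are given as finite association lists assigning to finitely many variables a regular expression over Σ, all unlisted variables being constrained to Σ* — defined by 'L_E(α, r_α) = L_E(β, r_β)' is not a computable predicate. -/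
/-- The binary alphabet `{0, #}`: `false` represents `0`, `true` represents `#`. -/
abbrev Bin := Bool

/-- Patterns over `Σ ∪ X` with `Σ = Bin` and variable set `X = ℕ`. -/
abbrev Pattern := List (Bin ⊕ ℕ)

/-- Applying a substitution (determined by its action on variables, and fixing every
terminal) to a pattern; this is the restriction of the induced monoid morphism
`(Σ ∪ X)* → Σ*`. -/
def applySub (s : ℕ → List Bin) : Pattern → List Bin
  | [] => []
  | c :: p => Sum.elim (fun a => [a]) s c ++ applySub s p

/-- The set of variables occurring in a pattern. -/
def varsOf (p : Pattern) : Set ℕ := {x | Sum.inr x ∈ p}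

/-- A substitution is `r`-valid on `p` if every variable occurring in `p` is mapped into
its constraint language. -/
def Valid (r : ℕ → Set (List Bin)) (p : Pattern) (s : ℕ → List Bin) : Prop :=
  ∀ x ∈ varsOf p, s x ∈ r x

/-- The erasing constrained pattern language `L_E(p, r)`. -/
def LangE (p : Pattern) (r : ℕ → Set (List Bin)) : Set (List Bin) :=
  {w | ∃ s, Valid r p s ∧ applySub s p = w}

/-- A regular constraint, given as a finite association list assigning regular
expressions to finitely many variables. -/
abbrev RegConstraint := List (ℕ × RegularExpression Bin)

/-- The constraint described by an association list: unlisted variables are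
constrained to `Σ*`. -/
def constraintOf (l : RegConstraint) : ℕ → Set (List Bin) := fun x =>
  match l.lookup x with
  | some e => (e.matches' : Set (List Bin))
  | none => Set.univ

/-- A standard injective encoding of regular expressions into `ℕ`. -/
def encRE : RegularExpression Bin → ℕ
  | .zero => Nat.pair 0 0
  | .epsilon => Nat.pair 1 0
  | .char a => Nat.pair 2 (Encodable.encode a)
  | .plus r s => Nat.pair 3 (Nat.pair (encRE r) (encRE s))
  | .comp r s => Nat.pair 4 (Nat.pair (encRE r) (encRE s))
  | .star r => Nat.pair 5 (encRE r)

/-- A standard encoding of an input pair `((α, r_α), (β, r_β))` into `ℕ`. -/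
def encodeInput (inp : (Pattern × RegConstraint) × (Pattern × RegConstraint)) : ℕ :=
  Encodable.encode ((inp.1.1, inp.1.2.map fun q => (q.1, encRE q.2)),
                    (inp.2.1, inp.2.2.map fun q => (q.1, encRE q.2)))

namespace EqUndec

open Computability

section Binary

variable {Γ : Type}

/-- Letter-level patterns. -/
abbrev LPat (Γ : Type) := List (Γ ⊕ ℕ)

/-- Letter-level substitution. -/
def lsub (σ : ℕ → List Γ) (p : LPat Γ) : List Γ := p.flatMap (Sum.elim (fun g => [g]) σ)

@[simp] theorem lsub_nil (σ : ℕ → List Γ) : lsub σ [] = [] := rfl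
@[simp] theorem lsub_inl (σ : ℕ → List Γ) (g : Γ) (p : LPat Γ) :
    lsub σ (Sum.inl g :: p) = g :: lsub σ p := rfl
@[simp] theorem lsub_inr (σ : ℕ → List Γ) (j : ℕ) (p : LPat Γ) :
    lsub σ (Sum.inr j :: p) = σ j ++ lsub σ p := rfl
@[simp] theorem lsub_append (σ : ℕ → List Γ) (p q : LPat Γ) :
    lsub σ (p ++ q) = lsub σ p ++ lsub σ q := by
  simp [lsub]

/-- Binary code of a letter. -/
def code (num : Γ → ℕ) (g : Γ) : List Bool := List.replicate (num g + 1) false ++ [true]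

/-- Binary code of a word. -/
def encW (num : Γ → ℕ) (u : List Γ) : List Bool := u.flatMap (code num)

@[simp] theorem encW_nil (num : Γ → ℕ) : encW num [] = [] := rfl
@[simp] theorem encW_cons (num : Γ → ℕ) (g : Γ) (u : List Γ) :
    encW num (g :: u) = code num g ++ encW num u := rfl
@[simp] theorem encW_append (num : Γ → ℕ) (u v : List Γ) :
    encW num (u ++ v) = encW num u ++ encW num v := by simp [encW]

theorem rep_inj : ∀ (m n : ℕ) (a b : List Bool),
    List.replicate m false ++ true :: a = List.replicate n false ++ true :: b → m = n ∧ a = b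
  | 0, 0, a, b, h => by simpa using h
  | 0, n + 1, a, b, h => by simp [List.replicate_succ] at h
  | m + 1, 0, a, b, h => by simp [List.replicate_succ] at h
  | m + 1, n + 1, a, b, h => by
      have := rep_inj m n a b (by simpa [List.replicate_succ] using h)
      simpa using this

theorem encW_head (num : Γ → ℕ) (u : List Γ) (r : List Bool) :
    ∃ t, encW num u ++ false :: r = false :: t := by
  cases u with
  | nil => exact ⟨r, rfl⟩
  | cons g u => exact ⟨_, by simp [code, List.replicate_succ]; rfl⟩

theorem encW_cancel (num : Γ → ℕ) (hnum : Function.Injective num) :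
    ∀ (u' u : List Γ) (r : List Bool),
      encW num u' ++ [false, true, true, true] ++ r = encW num u ++ [false, true, true, true] →
      u' = u ∧ r = []
  | [], [], r, h => by simpa using h
  | [], g :: u, r, h => by
      exfalso
      have h2 : List.replicate 1 false ++ true :: (true :: true :: r) =
        List.replicate (num g + 1) false ++ true ::
          (encW num u ++ [false, true, true, true]) := by
        simpa [code] using h
      obtain ⟨t, ht⟩ := encW_head num u [true, true, true]
      have := (rep_inj _ _ _ _ h2).2
      rw [ht] at this
      simp at this
  | g :: u, [], r, h => by
      exfalso
      have h2 : List.replicate (num g + 1) false ++ true ::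
          (encW num u ++ [false, true, true, true] ++ r) =
          List.replicate 1 false ++ true :: [true, true] := by
        simpa [code] using h
      obtain ⟨t, ht⟩ := encW_head num u ([true, true, true] ++ r)
      have := (rep_inj _ _ _ _ h2).2
      simp at this ht
      rw [ht] at this
      simp at this
  | g :: u', g' :: u, r, h => by
      have h2 : List.replicate (num g + 1) false ++ true ::
          (encW num u' ++ [false, true, true, true] ++ r) =
          List.replicate (num g' + 1) false ++ true ::
          (encW num u ++ [false, true, true, true]) := by
        simpa [code] using h
      obtain ⟨h3, h4⟩ := rep_inj _ _ _ _ h2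
      obtain ⟨h5, h6⟩ := encW_cancel num hnum u' u r h4
      have : g = g' := hnum (by omega)
      subst this; subst h5
      exact ⟨rfl, h6⟩

/-! Regular expressions. -/

def wordRE : List Bool → RegularExpression Bool
  | [] => .epsilon
  | b :: l => .comp (.char b) (wordRE l)

theorem mem_comp (a b : RegularExpression Bool) (w : List Bool) :
    w ∈ (RegularExpression.comp a b).matches' ↔
      ∃ x ∈ a.matches', ∃ y ∈ b.matches', x ++ y = w := by
  show w ∈ a.matches' * b.matches' ↔ _
  exact Language.mem_mul

theorem mem_plus (a b : RegularExpression Bool) (w : List Bool) :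
    w ∈ (RegularExpression.plus a b).matches' ↔ w ∈ a.matches' ∨ w ∈ b.matches' := by
  show w ∈ a.matches' + b.matches' ↔ _
  exact Language.mem_add _ _ _

theorem mem_eps (w : List Bool) :
    w ∈ (RegularExpression.epsilon : RegularExpression Bool).matches' ↔ w = [] := by
  show w ∈ (1 : Language Bool) ↔ _
  exact Language.mem_one _

theorem mem_zero (w : List Bool) :
    ¬ w ∈ (RegularExpression.zero : RegularExpression Bool).matches' := by
  show ¬ w ∈ (0 : Language Bool)
  exact Language.notMem_zero _

theorem mem_char (b : Bool) (w : List Bool) :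
    w ∈ (RegularExpression.char b).matches' ↔ w = [b] := by
  show w ∈ ({[b]} : Set (List Bool)) ↔ _
  exact Iff.rfl

theorem mem_star (a : RegularExpression Bool) (w : List Bool) :
    w ∈ (RegularExpression.star a).matches' ↔
      ∃ S : List (List Bool), w = S.flatten ∧ ∀ y ∈ S, y ∈ a.matches' := by
  show w ∈ a.matches'∗ ↔ _
  exact Language.mem_kstar

theorem mem_wordRE (l w : List Bool) : w ∈ (wordRE l).matches' ↔ w = l := by
  induction l generalizing w with
  | nil => exact mem_eps w
  | cons b l ih =>
    simp only [wordRE, mem_comp, mem_char, ih]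
    constructor
    · rintro ⟨x, rfl, y, rfl, rfl⟩; rfl
    · rintro rfl; exact ⟨_, rfl, _, rfl, rfl⟩

def sumRE (num : Γ → ℕ) : List Γ → RegularExpression Bool
  | [] => .zero
  | g :: l => .plus (wordRE (code num g)) (sumRE num l)

theorem mem_sumRE (num : Γ → ℕ) (A : List Γ) (w : List Bool) :
    w ∈ (sumRE num A).matches' ↔ ∃ g ∈ A, w = code num g := by
  induction A with
  | nil => simp [sumRE]
  | cons g l ih => rw [sumRE, mem_plus, mem_wordRE, ih]; simp

def starRE (num : Γ → ℕ) (A : List Γ) : RegularExpression Bool := .star (sumRE num A)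

theorem mem_starRE (num : Γ → ℕ) (A : List Γ) (w : List Bool) :
    w ∈ (starRE num A).matches' ↔ ∃ u : List Γ, (∀ g ∈ u, g ∈ A) ∧ w = encW num u := by
  rw [starRE, mem_star]
  constructor
  · rintro ⟨S, rfl, hS⟩
    induction S with
    | nil => exact ⟨[], by simp, rfl⟩
    | cons x S ih =>
      obtain ⟨u, hu, hu2⟩ := ih (fun y hy => hS y (by simp [hy]))
      obtain ⟨g, hg, rfl⟩ := (mem_sumRE _ _ _).1 (hS x (by simp))
      refine ⟨g :: u, ?_, ?_⟩
      · simpa [hg] using hu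
      · simp [hu2]
  · rintro ⟨u, hu, rfl⟩
    refine ⟨u.map (code num), by simp [encW, List.flatMap], ?_⟩
    intro y hy
    obtain ⟨g, hg, rfl⟩ := List.mem_map.1 hy
    exact (mem_sumRE _ _ _).2 ⟨g, hu g hg, rfl⟩

theorem applySub_append (s : ℕ → List Bin) (p q : Pattern) :
    applySub s (p ++ q) = applySub s p ++ applySub s q := by
  induction p with
  | nil => rfl
  | cons c p ih => simp [applySub, ih]

theorem applySub_congr (s s' : ℕ → List Bin) (p : Pattern)
    (h : ∀ x, Sum.inr x ∈ p → s x = s' x) : applySub s p = applySub s' p := by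
  induction p with
  | nil => rfl
  | cons c p ih =>
    rw [applySub, applySub, ih (fun x hx => h x (by simp [hx]))]
    cases c with
    | inl a => rfl
    | inr x => simp [h x (by simp)]

theorem applySub_replicate (s : ℕ → List Bin) (x n : ℕ) (a : Bool) (h : s x = [a]) :
    applySub s (List.replicate n (Sum.inr x)) = List.replicate n a := by
  induction n with
  | zero => rfl
  | succ n ih => simp [List.replicate_succ, applySub, ih, h]

theorem applySub_replicate_nil (s : ℕ → List Bin) (x n : ℕ) (h : s x = []) :
    applySub s (List.replicate n (Sum.inr x)) = [] := by
  induction n with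
  | zero => rfl
  | succ n ih => simp [List.replicate_succ, applySub, ih, h]

def vr (i j : ℕ) : ℕ := Nat.pair i j + 1

/-- The body of component `i`. -/
def bodyP (num : Γ → ℕ) (i : ℕ) : LPat Γ → Pattern
  | [] => []
  | Sum.inl g :: p => List.replicate (num g + 1) (Sum.inr (vr i 1)) ++
      (Sum.inr (vr i 0) :: bodyP num i p)
  | Sum.inr j :: p => Sum.inr (vr i (j + 2)) :: bodyP num i p

def compP (num : Γ → ℕ) (i : ℕ) (p : LPat Γ) : Pattern :=
  [.inr (vr i 0), .inr (vr i 0), .inr (vr i 0), .inr (vr i 1),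
    .inr (vr i 0), .inr (vr i 0), .inr (vr i 0)] ++ bodyP num i p ++
  [.inr (vr i 1), .inr (vr i 0), .inr (vr i 0), .inr (vr i 0)]

def fullP (num : Γ → ℕ) : ℕ → List (LPat Γ) → Pattern
  | _, [] => []
  | i, p :: ps => compP num i p ++ fullP num (i + 1) ps

theorem body_active (num : Γ → ℕ) (i : ℕ) (s : ℕ → List Bin) (σ : ℕ → List Γ)
    (h0 : s (vr i 0) = [true]) (h1 : s (vr i 1) = [false])
    (hx : ∀ j, s (vr i (j + 2)) = encW num (σ j)) (p : LPat Γ) :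
    applySub s (bodyP num i p) = encW num (lsub σ p) := by
  induction p with
  | nil => rfl
  | cons c p ih =>
    cases c with
    | inl g =>
      simp [bodyP, applySub_append, applySub_replicate _ _ _ _ h1, applySub, h0, ih, code]
    | inr j => simp [bodyP, applySub, ih, hx]

theorem body_inactive (num : Γ → ℕ) (i : ℕ) (s : ℕ → List Bin) (σ : ℕ → List Γ)
    (h0 : s (vr i 0) = []) (h1 : s (vr i 1) = [])
    (hx : ∀ j, s (vr i (j + 2)) = encW num (σ j)) (p : LPat Γ) :
    ∃ u, applySub s (bodyP num i p) = encW num u := by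
  induction p with
  | nil => exact ⟨[], rfl⟩
  | cons c p ih =>
    obtain ⟨u, hu⟩ := ih
    cases c with
    | inl g =>
      exact ⟨u, by
        simp [bodyP, applySub_append, applySub_replicate_nil _ _ _ h1, applySub, h0, hu]⟩
    | inr j => exact ⟨σ j ++ u, by simp [bodyP, applySub, hu, hx]⟩

theorem comp_val (num : Γ → ℕ) (i : ℕ) (s : ℕ → List Bin) (p : LPat Γ) :
    applySub s (compP num i p) =
      s (vr i 0) ++ s (vr i 0) ++ s (vr i 0) ++ s (vr i 1) ++
      s (vr i 0) ++ s (vr i 0) ++ s (vr i 0) ++ applySub s (bodyP num i p) ++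
      s (vr i 1) ++ s (vr i 0) ++ s (vr i 0) ++ s (vr i 0) := by
  simp [compP, applySub_append, applySub]

/-- Wrapped word. -/
def wrap (num : Γ → ℕ) (u : List Γ) : List Bool :=
  [true, true, true, false, true, true, true] ++ (encW num u ++ [false, true, true, true])

theorem comp_nil (num : Γ → ℕ) (i : ℕ) (s : ℕ → List Bin) (p : LPat Γ)
    (h : ∀ j, s (vr i j) = []) : applySub s (compP num i p) = [] := by
  have hb : applySub s (bodyP num i p) = [] := by
    induction p with
    | nil => rfl
    | cons c p ih =>
      cases c with
      | inl g => simp [bodyP, applySub_append, applySub_replicate_nil _ _ _ (h 1), applySub, h, ih]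
      | inr j => simp [bodyP, applySub, ih, h]
  simp [comp_val, h, hb]

theorem full_nil (num : Γ → ℕ) (s : ℕ → List Bin) : ∀ (ps : List (LPat Γ)) (k : ℕ),
    (∀ i ≥ k, ∀ j, s (vr i j) = []) → applySub s (fullP num k ps) = []
  | [], k, h => rfl
  | p :: ps, k, h => by
    rw [fullP, applySub_append, comp_nil num k s p (h k le_rfl),
      full_nil num s ps (k + 1) (fun i hi => h i (by omega))]
    rfl

theorem full_single (num : Γ → ℕ) (p : LPat Γ) : ∀ (ps : List (LPat Γ)) (k : ℕ), p ∈ ps →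
    ∃ i ≥ k, ∀ s : ℕ → List Bin, (∀ i', i' ≠ i → ∀ j, s (vr i' j) = []) →
      applySub s (fullP num k ps) = applySub s (compP num i p)
  | [], k, h => by simp at h
  | q :: ps, k, h => by
    rcases List.mem_cons.1 h with rfl | h
    · refine ⟨k, le_rfl, fun s hs => ?_⟩
      rw [fullP, applySub_append, full_nil num s ps (k + 1) (fun i hi => hs i (by omega))]
      simp
    · obtain ⟨i, hi, H⟩ := full_single num p ps (k + 1) h
      refine ⟨i, by omega, fun s hs => ?_⟩
      rw [fullP, applySub_append, comp_nil num k s q (hs k (by omega)), H s hs]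
      rfl

/-- Types of the variables: `Al` is the alphabet, `D j` the letters allowed in variable `j`. -/
noncomputable def tyL (Al : List Γ) (D : ℕ → Γ → Prop) (j : ℕ) : List Γ :=
  letI := Classical.decPred (D j)
  Al.filter (fun g => D j g)

theorem mem_tyL (Al : List Γ) (D : ℕ → Γ → Prop) (j : ℕ) (g : Γ) :
    g ∈ tyL Al D j ↔ g ∈ Al ∧ D j g := by
  simp [tyL]

noncomputable def T (num : Γ → ℕ) (Al : List Γ) (D : ℕ → Γ → Prop) (v : ℕ) :
    RegularExpression Bool :=
  match (Nat.unpair (v - 1)).2 with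
  | 0 => .plus .epsilon (.char true)
  | 1 => .plus .epsilon (.char false)
  | j + 2 => starRE num (tyL Al D j)

theorem T0 (num : Γ → ℕ) (Al : List Γ) (D : ℕ → Γ → Prop) (i : ℕ) (w : List Bool) :
    w ∈ (T num Al D (vr i 0)).matches' ↔ w = [] ∨ w = [true] := by
  rw [← mem_eps, ← mem_char, ← mem_plus]; simp only [T, vr, Nat.add_sub_cancel, Nat.unpair_pair]

theorem T1 (num : Γ → ℕ) (Al : List Γ) (D : ℕ → Γ → Prop) (i : ℕ) (w : List Bool) :
    w ∈ (T num Al D (vr i 1)).matches' ↔ w = [] ∨ w = [false] := by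
  rw [← mem_eps, ← mem_char, ← mem_plus]; simp only [T, vr, Nat.add_sub_cancel, Nat.unpair_pair]

theorem T2 (num : Γ → ℕ) (Al : List Γ) (D : ℕ → Γ → Prop) (i j : ℕ) (w : List Bool) :
    w ∈ (T num Al D (vr i (j + 2))).matches' ↔
      ∃ u : List Γ, (∀ g ∈ u, g ∈ Al ∧ D j g) ∧ w = encW num u := by
  simp [T, vr, mem_starRE, mem_tyL]

theorem T_nil (num : Γ → ℕ) (Al : List Γ) (D : ℕ → Γ → Prop) (v : ℕ) :
    [] ∈ (T num Al D v).matches' := by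
  unfold T
  split
  · exact (mem_plus _ _ _).2 (Or.inl ((mem_eps _).2 rfl))
  · exact (mem_plus _ _ _).2 (Or.inl ((mem_eps _).2 rfl))
  · exact (mem_starRE _ _ _).2 ⟨[], by simp, rfl⟩

/-- Typed letter-level substitutions. -/
def Typed (Al : List Γ) (D : ℕ → Γ → Prop) (σ : ℕ → List Γ) : Prop :=
  ∀ j, ∀ g ∈ σ j, g ∈ Al ∧ D j g

theorem full_decode (num : Γ → ℕ) (hnum : Function.Injective num) (Al : List Γ)
    (D : ℕ → Γ → Prop) (s : ℕ → List Bin)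
    (hs : ∀ m, s (m + 1) ∈ (T num Al D (m + 1)).matches') (u : List Γ) :
    ∀ (ps : List (LPat Γ)) (k : ℕ), applySub s (fullP num k ps) = wrap num u →
      ∃ p ∈ ps, ∃ σ, Typed Al D σ ∧ lsub σ p = u
  | [], k, h => by simp [fullP, applySub, wrap] at h
  | p :: ps, k, h => by
    have hx : ∀ j, ∃ u : List Γ, (∀ g ∈ u, g ∈ Al ∧ D j g) ∧ s (vr k (j + 2)) = encW num u :=
      fun j => (T2 num Al D k j _).1 (hs _)
    choose σ hσ hσ2 using hx
    rw [fullP, applySub_append, comp_val] at h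
    rcases (T0 num Al D k _).1 (hs _) with h0 | h0 <;>
    rcases (T1 num Al D k _).1 (hs _) with h1 | h1 <;>
    change s (vr k 0) = _ at h0 <;> change s (vr k 1) = _ at h1
    · obtain ⟨v, hv⟩ := body_inactive num k s σ h0 h1 hσ2 p
      rw [h0, h1, hv] at h
      cases v with
      | nil =>
        obtain ⟨q, hq, H⟩ := full_decode num hnum Al D s hs u ps (k + 1) (by simpa using h)
        exact ⟨q, by simp [hq], H⟩
      | cons g v => simp [wrap, code, List.replicate_succ] at h
    · rw [h0, h1] at h
      simp [wrap] at h
    · rw [h0, h1] at h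
      simp [wrap] at h
    · rw [h0, h1, body_active num k s σ h0 h1 hσ2 p] at h
      refine ⟨p, by simp, σ, hσ, ?_⟩
      refine (encW_cancel num hnum _ u (applySub s (fullP num (k + 1) ps)) ?_).1
      simpa [wrap] using h

/-- The whole pattern. -/
def theP (num : Γ → ℕ) (ps : List (LPat Γ)) : Pattern := .inr 0 :: fullP num 0 ps

def vlist (p : Pattern) : List ℕ := p.filterMap (Sum.elim (fun _ => none) some)

noncomputable def con (num : Γ → ℕ) (Al : List Γ) (D : ℕ → Γ → Prop) (ps : List (LPat Γ))
    (Y : RegularExpression Bool) : RegConstraint :=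
  (0, Y) :: (vlist (fullP num 0 ps)).map (fun v => (v, T num Al D v))

theorem lookup_map (f : ℕ → RegularExpression Bool) (x : ℕ) : ∀ l : List ℕ, x ∈ l →
    (l.map (fun v => (v, f v))).lookup x = some (f x)
  | [], h => by simp at h
  | y :: l, h => by
    by_cases hxy : x = y
    · subst hxy; simp
    · have : x ∈ l := by simpa [hxy] using h
      have h2 : (x == y) = false := by simpa using hxy
      simp [List.lookup_cons, h2, lookup_map f x l this]

theorem con_zero (num : Γ → ℕ) (Al : List Γ) (D : ℕ → Γ → Prop) (ps : List (LPat Γ))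
    (Y : RegularExpression Bool) : constraintOf (con num Al D ps Y) 0 = Y.matches' := by
  simp only [constraintOf, con, List.lookup_cons, beq_self_eq_true]
  rfl

theorem con_succ (num : Γ → ℕ) (Al : List Γ) (D : ℕ → Γ → Prop) (ps : List (LPat Γ))
    (Y : RegularExpression Bool) (m : ℕ) (h : Sum.inr (m + 1) ∈ fullP num 0 ps) :
    constraintOf (con num Al D ps Y) (m + 1) = (T num Al D (m + 1)).matches' := by
  have h1 : m + 1 ∈ vlist (fullP num 0 ps) := by
    simp only [vlist, List.mem_filterMap]
    exact ⟨_, h, rfl⟩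
  have h2 : (m + 1 == 0) = false := by simp
  simp only [constraintOf, con, List.lookup_cons, h2, lookup_map _ _ _ h1]
  rfl

theorem mem_lang (num : Γ → ℕ) (Al : List Γ) (D : ℕ → Γ → Prop) (ps : List (LPat Γ))
    (Y : RegularExpression Bool) (w : List Bool) :
    w ∈ LangE (theP num ps) (constraintOf (con num Al D ps Y)) ↔
      ∃ s : ℕ → List Bin, s 0 ∈ Y.matches' ∧ (∀ m, s (m + 1) ∈ (T num Al D (m + 1)).matches') ∧
        s 0 ++ applySub s (fullP num 0 ps) = w := by
  classical
  constructor
  · rintro ⟨s, hv, rfl⟩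
    refine ⟨fun x => if Sum.inr x ∈ theP num ps then s x else [], ?_, ?_, ?_⟩
    · have := hv 0 (by simp [varsOf, theP])
      rw [con_zero] at this
      have h0 : Sum.inr 0 ∈ theP num ps := by simp [theP]
      simp only [h0, if_true]
      exact this
    · intro m
      by_cases hm : Sum.inr (m + 1) ∈ theP num ps
      · simp only [hm, if_true]
        have := hv (m + 1) hm
        rwa [con_succ _ _ _ _ _ _ (by simpa [theP] using hm)] at this
      · simp only [hm, if_false]
        exact T_nil _ _ _ _
    · rw [theP, applySub]
      simp only [Sum.elim_inr]
      congr 1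
      · simp
      · apply applySub_congr
        intro x hx
        simp [hx]
  · rintro ⟨s, h0, hs, rfl⟩
    refine ⟨s, ?_, rfl⟩
    intro x hx
    cases x with
    | zero => rw [con_zero]; exact h0
    | succ m =>
      rw [con_succ _ _ _ _ _ _ (by simpa [varsOf, theP] using hx)]
      exact hs m

/-- The common choices for the first variable. -/
def Y0 (num : Γ → ℕ) (Al : List Γ) : RegularExpression Bool :=
  .plus .epsilon
    (.comp (wordRE [true, true, true, false, true, true, true])
      (.comp (starRE num Al) (.comp (wordRE [false, true, true, true])
        (.comp (.plus (.char true) (.char false)) (.star (.plus (.char true) (.char false)))))))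

theorem flat_single : ∀ b : List Bool, (b.map (fun x => [x])).flatten = b
  | [] => rfl
  | x :: b => by
    rw [List.map_cons, List.flatten_cons, flat_single b]
    rfl

theorem mem_Y0 (num : Γ → ℕ) (Al : List Γ) (w : List Bool) :
    w ∈ (Y0 num Al).matches' ↔ w = [] ∨
      ∃ u : List Γ, ∃ b : List Bool, (∀ g ∈ u, g ∈ Al) ∧ b ≠ [] ∧ w = wrap num u ++ b := by
  have hst : ∀ b : List Bool,
      b ∈ (RegularExpression.star (.plus (.char true) (.char false))).matches' := by
    intro b
    rw [mem_star]
    refine ⟨b.map (fun x => [x]), (flat_single b).symm, ?_⟩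
    intro y hy
    obtain ⟨x, -, rfl⟩ := List.mem_map.1 hy
    rw [mem_plus, mem_char, mem_char]
    cases x <;> simp
  simp only [Y0, mem_plus, mem_eps, mem_comp, mem_wordRE, mem_starRE, mem_char]
  apply or_congr Iff.rfl
  constructor
  · rintro ⟨_, rfl, _, ⟨_, ⟨u, hu, rfl⟩, _, ⟨_, rfl, _, ⟨x, hx, y, hy, rfl⟩, rfl⟩, rfl⟩, rfl⟩
    refine ⟨u, x ++ y, hu, ?_, by simp [wrap]⟩
    rcases hx with rfl | rfl <;> simp
  · rintro ⟨u, b, hu, hb, rfl⟩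
    obtain ⟨c, b, rfl⟩ := List.exists_cons_of_ne_nil hb
    refine ⟨_, rfl, _, ⟨_, ⟨u, hu, rfl⟩, _, ⟨_, rfl, _, ⟨[c], ?_, b, hst b, rfl⟩, rfl⟩, rfl⟩, ?_⟩
    · cases c <;> simp
    · simp [wrap]

/-- The union construction. -/
theorem lang_eq_iff (num : Γ → ℕ) (hnum : Function.Injective num) (Al : List Γ)
    (D : ℕ → Γ → Prop) (ps : List (LPat Γ)) (G : RegularExpression Bool) (W : Set (List Γ))
    (hW : ∀ u ∈ W, ∀ g ∈ u, g ∈ Al)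
    (hG : ∀ w, w ∈ G.matches' ↔ ∃ u ∈ W, w = wrap num u) :
    LangE (theP num ps) (constraintOf (con num Al D ps (.plus (Y0 num Al) G))) =
      LangE (theP num ps) (constraintOf (con num Al D ps (Y0 num Al))) ↔
    ∀ u ∈ W, ∃ p ∈ ps, ∃ σ, Typed Al D σ ∧ lsub σ p = u := by
  constructor
  · intro h u hu
    have h1 : wrap num u ∈
        LangE (theP num ps) (constraintOf (con num Al D ps (.plus (Y0 num Al) G))) := by
      rw [mem_lang]
      refine ⟨fun x => if x = 0 then wrap num u else [], ?_, ?_, ?_⟩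
      · exact (mem_plus _ _ _).2 (Or.inr ((hG _).2 ⟨u, hu, rfl⟩))
      · intro m; simp [T_nil]
      · rw [full_nil]
        · simp
        · intro i _ j; simp [vr]
    rw [h, mem_lang] at h1
    obtain ⟨s, h0, hs, hw⟩ := h1
    rcases (mem_Y0 _ _ _).1 h0 with h0 | ⟨v, b, -, hb, h0⟩
    · rw [h0] at hw
      exact full_decode num hnum Al D s hs u ps 0 hw
    · exfalso
      rw [h0] at hw
      have := (encW_cancel num hnum v u (b ++ applySub s (fullP num 0 ps))
        (by simpa [wrap] using hw)).2
      simp [hb] at this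
  · intro h
    ext w
    simp only [mem_lang]
    constructor
    · rintro ⟨s, h0, hs, rfl⟩
      rcases (mem_plus _ _ _).1 h0 with h0 | h0
      · exact ⟨s, h0, hs, rfl⟩
      obtain ⟨u, hu, h0⟩ := (hG _).1 h0
      rw [h0]
      by_cases hr : applySub s (fullP num 0 ps) = []
      · rw [hr]
        obtain ⟨p, hp, σ, hσ, hpu⟩ := h u hu
        obtain ⟨i, -, H⟩ := full_single num p ps 0 hp
        let s' : ℕ → List Bin := fun x => if x = 0 then [] else
          if (Nat.unpair (x - 1)).1 = i then
            match (Nat.unpair (x - 1)).2 with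
            | 0 => [true]
            | 1 => [false]
            | j + 2 => encW num (σ j)
          else []
        have e0 : s' (vr i 0) = [true] := by simp [s', vr]
        have e1 : s' (vr i 1) = [false] := by simp [s', vr]
        have e2 : ∀ j, s' (vr i (j + 2)) = encW num (σ j) := by intro j; simp [s', vr]
        have e3 : ∀ i', i' ≠ i → ∀ j, s' (vr i' j) = [] := by
          intro i' hi j; simp [s', vr, hi]
        refine ⟨s', (mem_Y0 _ _ _).2 (Or.inl (by simp [s'])), ?_, ?_⟩
        · intro m
          have hm : m + 1 = vr (Nat.unpair m).1 (Nat.unpair m).2 := by simp [vr]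
          rw [hm]
          generalize (Nat.unpair m).1 = a
          generalize (Nat.unpair m).2 = b
          by_cases ha : a = i
          · subst ha
            match b with
            | 0 => rw [e0, T0]; simp
            | 1 => rw [e1, T1]; simp
            | j + 2 => rw [e2, T2]; exact ⟨σ j, hσ j, rfl⟩
          · rw [e3 a ha]; exact T_nil _ _ _ _
        · rw [H s' e3, comp_val, e0, e1, body_active num i s' σ e0 e1 e2, hpu]
          simp [s', wrap]
      · refine ⟨fun x => if x = 0 then wrap num u ++ applySub s (fullP num 0 ps) else [],
          ?_, ?_, ?_⟩
        · exact (mem_Y0 _ _ _).2 (Or.inr ⟨u, _, hW u hu, hr, rfl⟩)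
        · intro m; simp [T_nil]
        · rw [full_nil num (fun x => if x = 0 then wrap num u ++ applySub s (fullP num 0 ps)
            else [])]
          · simp
          · intro i _ j; simp [vr]
    · rintro ⟨s, h0, hs, rfl⟩
      exact ⟨s, (mem_plus _ _ _).2 (Or.inl h0), hs, rfl⟩

end Binary

section Errors

variable {Γ : Type}

open Classical in
noncomputable def psub (x : ℕ) (a : Γ) (p : LPat Γ) : LPat Γ :=
  p.flatMap (fun c => if c = Sum.inr x then [Sum.inr x, Sum.inl a, Sum.inr (x + 10)] else [c])

open Classical in
theorem lsub_psub (τ : ℕ → List Γ) (x : ℕ) (a : Γ) (p : LPat Γ) :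
    lsub τ (psub x a p) = lsub (Function.update τ x (τ x ++ a :: τ (x + 10))) p := by
  induction p with
  | nil => rfl
  | cons c p ih =>
    have h : psub x a (c :: p) =
      (if c = Sum.inr x then [Sum.inr x, Sum.inl a, Sum.inr (x + 10)] else [c]) ++ psub x a p := rfl
    rw [h, lsub_append, ih]
    cases c with
    | inl g => simp
    | inr y =>
      by_cases hy : y = x
      · subst hy; simp
      · simp [hy]

theorem lsub_congr (σ τ : ℕ → List Γ) (p : LPat Γ) (h : ∀ x, Sum.inr x ∈ p → σ x = τ x) :
    lsub σ p = lsub τ p := by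
  induction p with
  | nil => rfl
  | cons c p ih =>
    have ih := ih (fun x hx => h x (by simp [hx]))
    cases c with
    | inl g => simp [ih]
    | inr y => simp [ih, h y (by simp)]

open Classical in
/-- Patterns for words that start with `pre` but do not continue with the given pattern. -/
noncomputable def errs (Al : List Γ) (D : ℕ → Γ → Prop) : LPat Γ → LPat Γ → List (LPat Γ)
  | _, [] => []
  | pre, Sum.inl g :: rest =>
      (Al.filter (fun b => b ≠ g)).map (fun b => pre ++ [Sum.inl b, Sum.inr 9]) ++
        errs Al D (pre ++ [Sum.inl g]) rest
  | pre, Sum.inr x :: rest =>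
      (tyL Al D x).flatMap (fun a => (Al.filter (fun b => b ≠ a)).map
        (fun b => psub x a pre ++ [Sum.inr x, Sum.inl b, Sum.inr 9])) ++
        errs Al D (pre ++ [Sum.inr x]) rest

theorem errs_sound (Al : List Γ) (D : ℕ → Γ → Prop) (hD : ∀ x g, D (x + 10) g → D x g)
    (τ : ℕ → List Γ) (hτ : Typed Al D τ) (q : LPat Γ) : ∀ (rest pre : LPat Γ),
    q ∈ errs Al D pre rest → ∃ σ, Typed Al D σ ∧ ∃ E, lsub τ q = lsub σ pre ++ E ∧
      ¬ lsub σ rest <+: E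
  | [], pre, h => by simp [errs] at h
  | Sum.inl g :: rest, pre, h => by
    rw [errs, List.mem_append] at h
    rcases h with h | h
    · obtain ⟨b, hb, rfl⟩ := List.mem_map.1 h
      have hb : b ∈ Al ∧ b ≠ g := by simpa using hb
      refine ⟨τ, hτ, b :: τ 9, by simp, ?_⟩
      rintro ⟨t, ht⟩
      simp at ht
      exact hb.2 ht.1.symm
    · obtain ⟨σ, hσ, E, hE, hn⟩ := errs_sound Al D hD τ hτ q rest _ h
      refine ⟨σ, hσ, g :: E, by simpa using hE, ?_⟩
      rw [lsub_inl, List.cons_prefix_cons]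
      exact fun h => hn h.2
  | Sum.inr x :: rest, pre, h => by
    rw [errs, List.mem_append] at h
    rcases h with h | h
    · obtain ⟨a, ha, h⟩ := List.mem_flatMap.1 h
      obtain ⟨b, hb, rfl⟩ := List.mem_map.1 h
      have hb : b ∈ Al ∧ b ≠ a := by simpa using hb
      rw [mem_tyL] at ha
      refine ⟨Function.update τ x (τ x ++ a :: τ (x + 10)), ?_, τ x ++ b :: τ 9, ?_, ?_⟩
      · intro j g hg
        by_cases hj : j = x
        · subst hj
          simp at hg
          rcases hg with hg | rfl | hg
          · exact hτ _ _ hg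
          · exact ha
          · exact ⟨(hτ _ _ hg).1, hD _ _ (hτ _ _ hg).2⟩
        · simp [hj] at hg
          exact hτ _ _ hg
      · simp [lsub_psub]
      · rintro ⟨t, ht⟩
        simp at ht
        exact hb.2 ht.1.symm
    · obtain ⟨σ, hσ, E, hE, hn⟩ := errs_sound Al D hD τ hτ q rest _ h
      refine ⟨σ, hσ, σ x ++ E, by simpa using hE, ?_⟩
      rw [lsub_inr, List.prefix_append_right_inj]
      exact hn

theorem mismatch : ∀ (u E : List Γ), u <+: E ∨ E <+: u ∨
    ∃ p a b u' E', a ≠ b ∧ u = p ++ a :: u' ∧ E = p ++ b :: E'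
  | [], E => Or.inl (by simp)
  | a :: u, [] => Or.inr (Or.inl (by simp))
  | a :: u, b :: E => by
    by_cases hab : a = b
    · subst hab
      rcases mismatch u E with h | h | ⟨p, c, d, u', E', h, rfl, rfl⟩
      · exact Or.inl (by simpa [List.cons_prefix_cons] using h)
      · exact Or.inr (Or.inl (by simpa [List.cons_prefix_cons] using h))
      · exact Or.inr (Or.inr ⟨a :: p, c, d, u', E', h, rfl, rfl⟩)
    · exact Or.inr (Or.inr ⟨[], a, b, u, E, hab, rfl, rfl⟩)

theorem errs_complete (Al : List Γ) (D : ℕ → Γ → Prop) (hD : ∀ x g, D x g → D (x + 10) g)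
    (hD9 : ∀ g, D 9 g) (σ : ℕ → List Γ) (hσ : Typed Al D σ) : ∀ (rest pre : LPat Γ) (E : List Γ),
    (∀ x, Sum.inr x ∈ pre → x < 9) → (∀ x, Sum.inr x ∈ rest → x < 9) → (∀ g ∈ E, g ∈ Al) →
    ¬ lsub σ rest <+: E → ¬ E <+: lsub σ rest →
    ∃ q ∈ errs Al D pre rest, ∃ τ, Typed Al D τ ∧ lsub τ q = lsub σ pre ++ E
  | [], pre, E, hp, hr, hE, h1, h2 => by simp at h1
  | Sum.inl g :: rest, pre, [], hp, hr, hE, h1, h2 => by simp at h2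
  | Sum.inl g :: rest, pre, b :: E, hp, hr, hE, h1, h2 => by
    by_cases hb : b = g
    · subst hb
      obtain ⟨q, hq, τ, hτ, h⟩ := errs_complete Al D hD hD9 σ hσ rest (pre ++ [Sum.inl b]) E
        (by intro x hx; exact hp x (by simpa using hx)) (fun x hx => hr x (by simp [hx]))
        (fun g hg => hE g (by simp [hg]))
        (fun h => h1 (by simpa [List.cons_prefix_cons] using h))
        (fun h => h2 (by simpa [List.cons_prefix_cons] using h))
      exact ⟨q, by rw [errs]; exact List.mem_append_right _ hq, τ, hτ, by simpa using h⟩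
    · refine ⟨pre ++ [Sum.inl b, Sum.inr 9], ?_, Function.update σ 9 E, ?_, ?_⟩
      · rw [errs]
        apply List.mem_append_left
        apply List.mem_map_of_mem
        have := hE b (by simp)
        simp [this, hb]
      · intro j c hc
        by_cases hj : j = 9
        · subst hj
          simp at hc
          exact ⟨hE c (by simp [hc]), hD9 c⟩
        · simp [hj] at hc
          exact hσ _ _ hc
      · rw [lsub_append, lsub_congr _ σ pre]
        · simp
        · intro x hx
          have := hp x hx
          rw [Function.update_of_ne (by omega)]
  | Sum.inr x :: rest, pre, E, hp, hr, hE, h1, h2 => by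
    rcases mismatch (σ x) E with ⟨E', rfl⟩ | h | ⟨p, a, b, u', E', hab, hu, rfl⟩
    · obtain ⟨q, hq, τ, hτ, h⟩ := errs_complete Al D hD hD9 σ hσ rest (pre ++ [Sum.inr x]) E'
        (by
          intro y hy
          rcases List.mem_append.1 hy with hy | hy
          · exact hp y hy
          · have : y = x := by simpa using hy
            subst this; exact hr y (by simp))
        (fun x hx => hr x (by simp [hx]))
        (fun g hg => hE g (by simp [hg]))
        (fun h => h1 (by rw [lsub_inr, List.prefix_append_right_inj]; exact h))
        (fun h => h2 (by rw [lsub_inr, List.prefix_append_right_inj]; exact h))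
      exact ⟨q, by rw [errs]; exact List.mem_append_right _ hq, τ, hτ, by simpa using h⟩
    · exact absurd (h.trans (by simp)) h2
    · have hx9 : x < 9 := hr x (by simp)
      let τ : ℕ → List Γ := Function.update (Function.update (Function.update σ 9 E') x p)
        (x + 10) u'
      have t9 : τ 9 = E' := by
        simp only [τ]
        rw [Function.update_of_ne (by omega), Function.update_of_ne (by omega),
          Function.update_self]
      have tx : τ x = p := by
        simp only [τ]
        rw [Function.update_of_ne (by omega), Function.update_self]
      have tx' : τ (x + 10) = u' := by
        simp only [τ]
        rw [Function.update_self]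
      have tot : ∀ y, y ≠ 9 → y ≠ x → y ≠ x + 10 → τ y = σ y := by
        intro y h1 h2 h3
        simp only [τ]
        rw [Function.update_of_ne h3, Function.update_of_ne h2, Function.update_of_ne h1]
      have hsx := hσ x
      rw [hu] at hsx
      have ha := hsx a (by simp)
      refine ⟨psub x a pre ++ [Sum.inr x, Sum.inl b, Sum.inr 9], ?_, τ, ?_, ?_⟩
      · rw [errs]
        apply List.mem_append_left
        refine List.mem_flatMap.2 ⟨a, (mem_tyL _ _ _ _).2 ha, ?_⟩
        apply List.mem_map_of_mem (f := fun b => psub x a pre ++ [Sum.inr x, Sum.inl b, Sum.inr 9])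
        have := hE b (by simp)
        simp [this, hab.symm]
      · intro j c hc
        by_cases h9 : j = 9
        · subst h9
          rw [t9] at hc
          exact ⟨hE c (by simp [hc]), hD9 c⟩
        by_cases hjx : j = x
        · subst hjx
          rw [tx] at hc
          exact hsx c (by simp [hc])
        by_cases hjx' : j = x + 10
        · subst hjx'
          rw [tx'] at hc
          have := hsx c (by simp [hc])
          exact ⟨this.1, hD _ _ this.2⟩
        rw [tot j h9 hjx hjx'] at hc
        exact hσ _ _ hc
      · rw [lsub_append, lsub_psub, tx, tx', lsub_congr _ σ pre]
        · simp [tx, t9]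
        · intro y hy
          have := hp y hy
          by_cases hyx : y = x
          · subst hyx
            rw [Function.update_self, hu]
          · rw [Function.update_of_ne hyx, tot y (by omega) hyx (by omega)]

/-! Histories. -/

theorem split_unique {x : Γ} : ∀ {a b c d : List Γ}, x ∉ a → x ∉ b → a ++ x :: c = b ++ x :: d →
    a = b ∧ c = d
  | [], [], c, d, ha, hb, h => by simpa using h
  | [], y :: b, c, d, ha, hb, h => by
    simp at h hb
    exact absurd h.1 hb.1
  | y :: a, [], c, d, ha, hb, h => by
    simp at h ha
    exact absurd h.1.symm ha.1
  | y :: a, z :: b, c, d, ha, hb, h => by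
    simp at h ha hb
    obtain ⟨rfl, h⟩ := h
    have := split_unique ha.2 hb.2 h
    simp [this]

inductive Halts {M : Type} (step : M → Option M) : M → Prop
  | base (m : M) : step m = none → Halts step m
  | more (m m' : M) : step m = some m' → Halts step m' → Halts step m

inductive Hist {M : Type} (enc : M → List Γ) (sh : Γ) (step : M → Option M) : M → List Γ → Prop
  | base (m : M) : step m = none → Hist enc sh step m []
  | more (m m' : M) (E : List Γ) : step m = some m' → Hist enc sh step m' E →
      Hist enc sh step m (enc m' ++ sh :: E)

structure Sys (Γ M : Type) where
  enc : M → List Γ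
  step : M → Option M
  sh : Γ
  hl : Γ
  Al : List Γ
  D : ℕ → Γ → Prop
  rules : List (LPat Γ × LPat Γ)
  hD : ∀ x g, D (x + 10) g ↔ D x g
  hD8 : ∀ g, D 8 g
  hD9 : ∀ g, D 9 g
  hDsh : ∀ j < 8, ¬ D j sh
  hv1 : ∀ r ∈ rules, ∀ x, Sum.inr x ∈ r.1 → x < 8
  hv2 : ∀ r ∈ rules, ∀ x, Sum.inr x ∈ r.2 → x < 8
  hsh1 : ∀ r ∈ rules, Sum.inl sh ∉ r.1
  hlet : ∀ r ∈ rules, ∀ g, Sum.inl g ∈ r.2 → g ∈ Al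
  hcomp : ∀ m m', (∀ g ∈ enc m, g ∈ Al) → step m = some m' → ∃ r ∈ rules, ∃ σ, Typed Al D σ ∧
    enc m = lsub σ r.1 ∧ enc m' = lsub σ r.2
  hsound : ∀ m, ∀ r ∈ rules, ∀ σ, Typed Al D σ → enc m = lsub σ r.1 →
    ∃ m', step m = some m' ∧ enc m' = lsub σ r.2
  hshm : ∀ m, sh ∉ enc m
  hhl1 : ∀ m, step m = none → enc m = [hl]
  hhl2 : ∀ m, hl ∈ enc m → step m = none
  hne : hl ≠ sh
  hshA : sh ∈ Al

namespace Sys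

variable {M : Type} (S : Sys Γ M)

noncomputable def pats : List (LPat Γ) :=
  S.rules.flatMap (fun r => errs S.Al S.D (Sum.inr 8 :: Sum.inl S.sh :: (r.1 ++ [Sum.inl S.sh]))
    (r.2 ++ [Sum.inl S.sh]))

def Cov (u : List Γ) : Prop := ∃ p ∈ S.pats, ∃ σ, Typed S.Al S.D σ ∧ lsub σ p = u

theorem mem_lsub (σ : ℕ → List Γ) (p : LPat Γ) (g : Γ) :
    g ∈ lsub σ p → Sum.inl g ∈ p ∨ ∃ j, Sum.inr j ∈ p ∧ g ∈ σ j := by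
  intro h
  obtain ⟨c, hc, hg⟩ := List.mem_flatMap.1 h
  cases c with
  | inl a => left; simp at hg; subst hg; exact hc
  | inr j => right; exact ⟨j, hc, by simpa using hg⟩

theorem good_step (m m' : M) (hm : ∀ g ∈ S.enc m, g ∈ S.Al) (h : S.step m = some m') :
    ∀ g ∈ S.enc m', g ∈ S.Al := by
  obtain ⟨r, hr, σ, hσ, -, h2⟩ := S.hcomp m m' hm h
  intro g hg
  rw [h2] at hg
  rcases mem_lsub _ _ _ hg with h | ⟨j, -, hj⟩
  · exact S.hlet r hr g h
  · exact (hσ j g hj).1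

theorem halts_of_uncov (n : ℕ) : ∀ (m : M) (P E : List Γ), E.length ≤ n →
    (∀ g ∈ P, g ∈ S.Al) → (∀ g ∈ S.enc m, g ∈ S.Al) → (∀ g ∈ E, g ∈ S.Al) →
    (S.hl ∈ S.enc m ∨ S.hl ∈ E) → (E = [] ∨ ∃ E', E = E' ++ [S.sh]) →
    ¬ S.Cov (P ++ S.sh :: (S.enc m ++ S.sh :: E)) → Halts S.step m := by
  induction n with
  | zero =>
    intro m P E hn hP hm hE h1 h2 h3
    have : E = [] := by simpa using hn
    subst this
    exact Halts.base m (S.hhl2 m (by simpa using h1))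
  | succ n ih =>
    intro m P E hn hP hm hE h1 h2 h3
    rcases h2 with rfl | ⟨E', hE'⟩
    · exact Halts.base m (S.hhl2 m (by simpa using h1))
    cases hst : S.step m with
    | none => exact Halts.base m hst
    | some m' =>
      refine Halts.more m m' hst ?_
      have hg := S.good_step m m' hm hst
      obtain ⟨r, hr, σ, hσ, e1, e2⟩ := S.hcomp m m' hm hst
      have key : S.enc m' ++ [S.sh] <+: E := by
        by_contra hcon
        have hcon2 : ¬ E <+: S.enc m' ++ [S.sh] := by
          rintro ⟨t, ht⟩
          apply hcon
          rw [hE', List.append_assoc] at ht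
          have ht' : E' ++ S.sh :: t = S.enc m' ++ S.sh :: [] := by simpa using ht
          have hs' : S.sh ∉ E' := by
            intro hmem
            obtain ⟨a, b, rfl⟩ := List.append_of_mem hmem
            classical
            have h0 : (S.enc m').count S.sh = 0 := List.count_eq_zero.2 (S.hshm m')
            have := congrArg (List.count S.sh) ht'
            simp [List.count_append, List.count_cons, h0] at this
            omega
          obtain ⟨q1, q2⟩ := split_unique hs' (S.hshm m') ht'
          rw [hE', q1]
        let σ' := Function.update σ 8 P
        have hσ' : Typed S.Al S.D σ' := by
          intro j g hg
          by_cases hj : j = 8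
          · subst hj
            simp [σ'] at hg
            exact ⟨hP g hg, S.hD8 g⟩
          · simp [σ', hj] at hg
            exact hσ _ _ hg
        have c1 : lsub σ' r.1 = lsub σ r.1 := lsub_congr _ _ _ (fun x hx => by
          have := S.hv1 r hr x hx
          simp only [σ']
          rw [Function.update_of_ne (by omega)])
        have c2 : lsub σ' r.2 = lsub σ r.2 := lsub_congr _ _ _ (fun x hx => by
          have := S.hv2 r hr x hx
          simp only [σ']
          rw [Function.update_of_ne (by omega)])
        obtain ⟨q, hq, τ, hτ, h⟩ := errs_complete S.Al S.D (fun x g => (S.hD x g).2) S.hD9 σ' hσ'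
          (r.2 ++ [Sum.inl S.sh]) (Sum.inr 8 :: Sum.inl S.sh :: (r.1 ++ [Sum.inl S.sh])) E
          (by
            intro x hx
            simp at hx
            rcases hx with rfl | hx
            · omega
            · have := S.hv1 r hr x hx; omega)
          (by
            intro x hx
            simp at hx
            have := S.hv2 r hr x hx; omega)
          hE (by simpa [c2, ← e2] using hcon) (by simpa [c2, ← e2] using hcon2)
        apply h3
        refine ⟨q, List.mem_flatMap.2 ⟨r, hr, hq⟩, τ, hτ, ?_⟩
        rw [h]
        simp [c1, ← e1, σ']
      obtain ⟨E2, rfl⟩ := key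
      apply ih m' (P ++ S.sh :: S.enc m) E2
      · simp at hn ⊢; omega
      · intro g hg
        simp at hg
        rcases hg with hg | rfl | hg
        · exact hP g hg
        · exact S.hshA
        · exact hm g hg
      · exact hg
      · intro g hg; exact hE g (by simp [hg])
      · rcases h1 with h1 | h1
        · rw [S.hhl2 m h1] at hst; simp at hst
        · simpa [S.hne] using h1
      · rcases List.eq_nil_or_concat E2 with h | ⟨L, b, h⟩
        · exact Or.inl h
        · right
          have hh : (S.enc m' ++ [S.sh] ++ L) ++ [b] = E' ++ [S.sh] := by
            rw [← hE', h]; simp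
          have := (List.append_inj' hh rfl).2
          exact ⟨L, by rw [h]; simpa using this⟩
      · simpa using h3

theorem hist_of_halts (m : M) (h : Halts S.step m) : ∃ E, Hist S.enc S.sh S.step m E := by
  induction h with
  | base m h => exact ⟨_, Hist.base m h⟩
  | more m m' h _ ih =>
    obtain ⟨E, hE⟩ := ih
    exact ⟨_, Hist.more m m' E h hE⟩

theorem hist_good (m : M) (E : List Γ) (h : Hist S.enc S.sh S.step m E)
    (hm : ∀ g ∈ S.enc m, g ∈ S.Al) : ∀ g ∈ E, g ∈ S.Al := by
  induction h with
  | base m h => simp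
  | more m m' E h _ ih =>
    have hg := S.good_step m m' hm h
    intro g hgE
    simp at hgE
    rcases hgE with h | rfl | h
    · exact hg g h
    · exact S.hshA
    · exact ih hg g h

theorem hist_end (m : M) (E : List Γ) (h : Hist S.enc S.sh S.step m E) :
    ∃ P, S.enc m ++ S.sh :: E = P ++ [S.hl, S.sh] := by
  induction h with
  | base m h => exact ⟨[], by simp [S.hhl1 m h]⟩
  | more m m' E h _ ih =>
    obtain ⟨P, hP⟩ := ih
    refine ⟨S.enc m ++ S.sh :: P, ?_⟩
    rw [hP]; simp

theorem hist_parse (m : M) (E : List Γ) (h : Hist S.enc S.sh S.step m E) :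
    ∀ (X l E' : List Γ), S.sh ∉ l → X ++ S.sh :: (l ++ S.sh :: E') = S.sh :: (S.enc m ++ S.sh :: E) →
    ∃ m', l = S.enc m' ∧ Hist S.enc S.sh S.step m' E' := by
  induction h with
  | base m h =>
    intro X l E' hl he
    cases X with
    | nil =>
      simp only [List.nil_append, List.cons.injEq, true_and] at he
      obtain ⟨h1, h2⟩ := split_unique hl (S.hshm m) he
      exact ⟨m, h1, h2 ▸ Hist.base m h⟩
    | cons x X =>
      exfalso
      classical
      have h0 : (S.enc m).count S.sh = 0 := List.count_eq_zero.2 (S.hshm m)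
      simp only [List.cons_append, List.cons.injEq] at he
      have := congrArg (List.count S.sh) he.2
      simp [List.count_append, List.count_cons, h0] at this
      omega
  | more m m' E h hh ih =>
    intro X l E' hl he
    cases X with
    | nil =>
      simp only [List.nil_append, List.cons.injEq, true_and] at he
      obtain ⟨h1, h2⟩ := split_unique hl (S.hshm m) he
      exact ⟨m, h1, h2 ▸ Hist.more m m' E h hh⟩
    | cons x X =>
      simp only [List.cons_append, List.cons.injEq] at he
      obtain ⟨-, he⟩ := he
      by_cases hX : S.sh ∈ X
      · obtain ⟨a, b, hab, hX2⟩ := List.eq_append_cons_of_mem hX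
        rw [hab] at he
        simp only [List.append_assoc, List.cons_append] at he
        obtain ⟨h1, h2⟩ := split_unique hX2 (S.hshm m) he
        exact ih (S.sh :: b) l E' hl (by simp [h2])
      · obtain ⟨h1, h2⟩ := split_unique hX (S.hshm m) he
        exact ih [] l E' hl (by simp [h2])

theorem uncov_of_hist (m : M) (E : List Γ) (h : Hist S.enc S.sh S.step m E) :
    ¬ S.Cov (S.sh :: (S.enc m ++ S.sh :: E)) := by
  rintro ⟨q, hq, τ, hτ, he⟩
  obtain ⟨r, hr, hq⟩ := List.mem_flatMap.1 hq
  obtain ⟨σ, hσ, E', h1, h2⟩ := errs_sound S.Al S.D (fun x g => (S.hD x g).1) τ hτ q _ _ hq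
  have hsh : S.sh ∉ lsub σ r.1 := by
    intro hmem
    rcases mem_lsub _ _ _ hmem with h | ⟨j, hj, hj2⟩
    · exact S.hsh1 r hr h
    · exact S.hDsh j (S.hv1 r hr j hj) (hσ j _ hj2).2
  rw [h1] at he
  obtain ⟨m', hm1, hm2⟩ := S.hist_parse m E h (σ 8) (lsub σ r.1) E' hsh (by simpa using he)
  obtain ⟨m'', hs1, hs2⟩ := S.hsound m' r hr σ hσ hm1.symm
  apply h2
  cases hm2 with
  | base _ h => rw [h] at hs1; simp at hs1
  | more _ m3 E h hh =>
    rw [h] at hs1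
    cases hs1
    rw [lsub_append, hs2]
    exact ⟨E, by simp⟩

/-- The set of candidate histories. -/
def W (m : M) : Set (List Γ) :=
  {u | ∃ E : List Γ, (∀ g ∈ E, g ∈ S.Al) ∧
    u = S.sh :: (S.enc m ++ S.sh :: (E ++ [S.hl, S.sh]))}

theorem main (m : M) (hm : ∀ g ∈ S.enc m, g ∈ S.Al) (hlA : S.hl ∈ S.Al)
    (hnh : ∃ m', S.step m = some m') :
    (∀ u ∈ S.W m, S.Cov u) ↔ ¬ Halts S.step m := by
  constructor
  · intro h hh
    obtain ⟨E, hE⟩ := S.hist_of_halts m hh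
    have hu := S.uncov_of_hist m E hE
    have hg := S.hist_good m E hE hm
    apply hu
    apply h
    cases hE with
    | base _ h => obtain ⟨m', h'⟩ := hnh; rw [h] at h'; simp at h'
    | more _ m' E h hh =>
      obtain ⟨P, hP⟩ := S.hist_end m' E hh
      refine ⟨P, ?_, by rw [hP]⟩
      intro g hgP
      apply hg
      rw [hP]; simp [hgP]
  · intro h u hu
    by_contra hc
    obtain ⟨E, hE, rfl⟩ := hu
    apply h
    refine S.halts_of_uncov _ m [] (E ++ [S.hl, S.sh]) le_rfl (by simp) hm ?_ (Or.inr (by simp))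
      (Or.inr ⟨E ++ [S.hl], by simp⟩) (by simpa using hc)
    intro g hg
    simp at hg
    rcases hg with hg | rfl | rfl
    · exact hE g hg
    · exact hlA
    · exact S.hshA

end Sys

end Errors

section Machine

open Turing.ToPartrec

/-- Letters of the machine encoding. -/
inductive Gm
  | S | cm | sc | R | H | K2 | HALT | sh
  | N (c : Code) | K1 (c : Code) | K3 (c : Code) | K4 (c : Code)

/-- Injective numbering of codes. -/
def cnum : Code → ℕ
  | .zero' => Nat.pair 0 0
  | .succ => Nat.pair 1 0
  | .tail => Nat.pair 2 0
  | .cons f g => Nat.pair 3 (Nat.pair (cnum f) (cnum g))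
  | .comp f g => Nat.pair 4 (Nat.pair (cnum f) (cnum g))
  | .case f g => Nat.pair 5 (Nat.pair (cnum f) (cnum g))
  | .fix f => Nat.pair 6 (cnum f)

theorem cnum_inj : ∀ c d : Code, cnum c = cnum d → c = d := by
  intro c
  induction c with
  | zero' => intro d h; cases d <;> simp [cnum, Nat.pair_eq_pair] at h ⊢
  | succ => intro d h; cases d <;> simp [cnum, Nat.pair_eq_pair] at h ⊢
  | tail => intro d h; cases d <;> simp [cnum, Nat.pair_eq_pair] at h ⊢
  | cons f g ihf ihg =>
    intro d h
    cases d <;> simp [cnum, Nat.pair_eq_pair] at h ⊢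
    exact ⟨ihf _ h.1, ihg _ h.2⟩
  | comp f g ihf ihg =>
    intro d h
    cases d <;> simp [cnum, Nat.pair_eq_pair] at h ⊢
    exact ⟨ihf _ h.1, ihg _ h.2⟩
  | case f g ihf ihg =>
    intro d h
    cases d <;> simp [cnum, Nat.pair_eq_pair] at h ⊢
    exact ⟨ihf _ h.1, ihg _ h.2⟩
  | fix f ihf =>
    intro d h
    cases d <;> simp [cnum, Nat.pair_eq_pair] at h ⊢
    exact ihf _ h

/-- Injective numbering of letters. -/
def gnum : Gm → ℕ
  | .S => Nat.pair 0 0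
  | .cm => Nat.pair 1 0
  | .sc => Nat.pair 2 0
  | .R => Nat.pair 3 0
  | .H => Nat.pair 4 0
  | .K2 => Nat.pair 5 0
  | .HALT => Nat.pair 6 0
  | .sh => Nat.pair 7 0
  | .N c => Nat.pair 8 (cnum c)
  | .K1 c => Nat.pair 9 (cnum c)
  | .K3 c => Nat.pair 10 (cnum c)
  | .K4 c => Nat.pair 11 (cnum c)

theorem gnum_inj : Function.Injective gnum := by
  intro a b h
  cases a <;> cases b <;> simp [gnum, Nat.pair_eq_pair] at h ⊢ <;> exact cnum_inj _ _ h

/-- Subcodes. -/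
def subs : Code → List Code
  | .zero' => [.zero']
  | .succ => [.succ]
  | .tail => [.tail]
  | .cons f g => .cons f g :: (subs f ++ subs g)
  | .comp f g => .comp f g :: (subs f ++ subs g)
  | .case f g => .case f g :: (subs f ++ subs g)
  | .fix f => .fix f :: subs f

theorem subs_self (c : Code) : c ∈ subs c := by cases c <;> simp [subs]

theorem subs_trans {c d e : Code} (h : c ∈ subs d) (h2 : e ∈ subs c) : e ∈ subs d := by
  induction d with
  | zero' => simp [subs] at h; subst h; exact h2
  | succ => simp [subs] at h; subst h; exact h2
  | tail => simp [subs] at h; subst h; exact h2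
  | cons f g ihf ihg =>
    simp only [subs, List.mem_cons, List.mem_append] at h
    rcases h with rfl | h | h
    · exact h2
    · simp [subs, ihf h]
    · simp [subs, ihg h]
  | comp f g ihf ihg =>
    simp only [subs, List.mem_cons, List.mem_append] at h
    rcases h with rfl | h | h
    · exact h2
    · simp [subs, ihf h]
    · simp [subs, ihg h]
  | case f g ihf ihg =>
    simp only [subs, List.mem_cons, List.mem_append] at h
    rcases h with rfl | h | h
    · exact h2
    · simp [subs, ihf h]
    · simp [subs, ihg h]
  | fix f ihf =>
    simp only [subs, List.mem_cons] at h
    rcases h with rfl | h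
    · exact h2
    · simp [subs, ihf h]

/-- The alphabet in use for a fixed program. -/
def Alph (c0 : Code) : List Gm :=
  [.S, .cm, .sc, .R, .H, .K2, .HALT, .sh] ++
    (subs c0).flatMap (fun c => [.N c, .K1 c, .K3 c, .K4 c])

@[simp] theorem mem_Alph (c0 : Code) (g : Gm) : g ∈ Alph c0 ↔
    (match g with
      | .N c => c ∈ subs c0
      | .K1 c => c ∈ subs c0
      | .K3 c => c ∈ subs c0
      | .K4 c => c ∈ subs c0
      | _ => True) := by
  cases g <;> simp [Alph]

/-- Micro configurations. -/
inductive MCfg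
  | nrm (c : Code) (k : Cont) (v : List ℕ)
  | ret (k : Cont) (v : List ℕ)
  | hlt

/-- One micro step. -/
def mstep : MCfg → Option MCfg
  | .nrm .zero' k v => some (.ret k (0 :: v))
  | .nrm .succ k [] => some (.ret k [1])
  | .nrm .succ k (n :: _) => some (.ret k [n + 1])
  | .nrm .tail k v => some (.ret k v.tail)
  | .nrm (.cons f fs) k v => some (.nrm f (.cons₁ fs v k) v)
  | .nrm (.comp f g) k v => some (.nrm g (.comp f k) v)
  | .nrm (.case f _) k [] => some (.nrm f k [])
  | .nrm (.case f _) k (0 :: v) => some (.nrm f k v)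
  | .nrm (.case _ g) k ((n + 1) :: v) => some (.nrm g k (n :: v))
  | .nrm (.fix f) k v => some (.nrm f (.fix f k) v)
  | .ret .halt _ => some .hlt
  | .ret (.cons₁ fs as k) v => some (.nrm fs (.cons₂ v k) as)
  | .ret (.cons₂ [] k) v => some (.ret k (0 :: v))
  | .ret (.cons₂ (n :: _) k) v => some (.ret k (n :: v))
  | .ret (.comp f k) v => some (.nrm f k v)
  | .ret (.fix _ k) [] => some (.ret k [])
  | .ret (.fix _ k) (0 :: v) => some (.ret k v)
  | .ret (.fix f k) ((_ + 1) :: v) => some (.nrm f (.fix f k) v)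
  | .hlt => none

/-- Encoding of lists of numbers. -/
def encL : List ℕ → List Gm
  | [] => []
  | n :: v => List.replicate n .S ++ .cm :: encL v

/-- Encoding of continuations. -/
def encK : Cont → List Gm
  | .halt => [.H]
  | .cons₁ fs as k => .K1 fs :: (encL as ++ .sc :: encK k)
  | .cons₂ ns k => .K2 :: (encL ns ++ .sc :: encK k)
  | .comp f k => .K3 f :: encK k
  | .fix f k => .K4 f :: encK k

/-- Encoding of configurations. -/
def encM : MCfg → List Gm
  | .nrm c k v => .N c :: (encK k ++ .R :: encL v)
  | .ret k v => encK k ++ .R :: encL v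
  | .hlt => [.HALT]

/-- Variable types. -/
def DD (j : ℕ) (g : Gm) : Prop :=
  match j % 10 with
  | 0 => g ≠ .R ∧ g ≠ .sh
  | 1 => g = .S ∨ g = .cm
  | 2 => g = .S
  | 3 => g = .S ∨ g = .cm
  | 8 => True
  | 9 => True
  | _ => g ≠ .sh

theorem mem_encL {v : List ℕ} {g : Gm} (h : g ∈ encL v) : g = .S ∨ g = .cm := by
  induction v with
  | nil => simp [encL] at h
  | cons n v ih =>
    simp only [encL, List.mem_append, List.mem_cons] at h
    rcases h with h | h | h
    · left; exact List.eq_of_mem_replicate h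
    · right; exact h
    · exact ih h

theorem mem_encK {k : Cont} {g : Gm} (h : g ∈ encK k) : g ≠ .R ∧ g ≠ .sh ∧ g ≠ .HALT := by
  induction k with
  | halt => simp [encK] at h; subst h; simp
  | cons₁ fs as k ih =>
    simp only [encK, List.mem_append, List.mem_cons] at h
    rcases h with rfl | h | rfl | h
    · simp
    · rcases mem_encL h with rfl | rfl <;> simp
    · simp
    · exact ih h
  | cons₂ as k ih =>
    simp only [encK, List.mem_append, List.mem_cons] at h
    rcases h with rfl | h | rfl | h
    · simp
    · rcases mem_encL h with rfl | rfl <;> simp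
    · simp
    · exact ih h
  | comp f k ih =>
    simp only [encK, List.mem_cons] at h
    rcases h with rfl | h
    · simp
    · exact ih h
  | fix f k ih =>
    simp only [encK, List.mem_cons] at h
    rcases h with rfl | h
    · simp
    · exact ih h

theorem encL_nil {v : List ℕ} (h : encL v = []) : v = [] := by
  cases v with
  | nil => rfl
  | cons n v => simp [encL] at h

theorem encL_cm {v : List ℕ} {t : List Gm} (h : encL v = .cm :: t) :
    ∃ v', v = 0 :: v' ∧ t = encL v' := by
  cases v with
  | nil => simp [encL] at h
  | cons n v =>
    cases n with
    | zero => simp [encL] at h; exact ⟨v, rfl, h.symm⟩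
    | succ n => simp [encL, List.replicate_succ] at h

theorem encL_S {v : List ℕ} {t : List Gm} (h : encL v = .S :: t) :
    ∃ n v', v = (n + 1) :: v' ∧ t = encL (n :: v') := by
  cases v with
  | nil => simp [encL] at h
  | cons n v =>
    cases n with
    | zero => simp [encL] at h
    | succ n =>
      simp [encL, List.replicate_succ] at h
      exact ⟨n, v, rfl, by simp [encL, h]⟩

theorem encL_n {v : List ℕ} {n t : List Gm} (hn : ∀ g ∈ n, g = Gm.S)
    (h : encL v = n ++ .cm :: t) :
    ∃ i v', v = i :: v' ∧ n = List.replicate i .S ∧ t = encL v' := by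
  cases v with
  | nil => simp [encL] at h
  | cons i v =>
    simp only [encL] at h
    obtain ⟨h1, h2⟩ := split_unique (fun h => by simpa using List.eq_of_mem_replicate h)
      (fun h => by simpa using hn _ h) h
    exact ⟨i, v, rfl, h1.symm, h2.symm⟩

theorem kR_split {k : Cont} {k' t t' : List Gm} (hk : Gm.R ∉ k')
    (h : encK k ++ .R :: t = k' ++ .R :: t') : k' = encK k ∧ t' = t := by
  obtain ⟨h1, h2⟩ := split_unique (fun h => (mem_encK h).1 rfl) hk h
  exact ⟨h1.symm, h2.symm⟩

theorem inv_N {m : MCfg} {c : Code} {X : List Gm} (h : encM m = .N c :: X) :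
    ∃ k v, m = .nrm c k v ∧ encK k ++ .R :: encL v = X := by
  cases m with
  | nrm c k v => simp [encM] at h; exact ⟨k, v, by rw [h.1], h.2⟩
  | ret k v => cases k <;> simp [encM, encK] at h
  | hlt => simp [encM] at h

theorem inv_H {m : MCfg} {X : List Gm} (h : encM m = .H :: X) :
    ∃ v, m = .ret .halt v := by
  cases m with
  | nrm c k v => simp [encM] at h
  | ret k v => cases k <;> simp [encM, encK] at h; exact ⟨v, rfl⟩
  | hlt => simp [encM] at h

theorem inv_K1 {m : MCfg} {c : Code} {X : List Gm} (h : encM m = .K1 c :: X) :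
    ∃ as k v, m = .ret (.cons₁ c as k) v ∧ encL as ++ .sc :: (encK k ++ .R :: encL v) = X := by
  cases m with
  | nrm c k v => simp [encM] at h
  | ret k v =>
    cases k <;> simp [encM, encK] at h
    exact ⟨_, _, v, by rw [h.1], h.2⟩
  | hlt => simp [encM] at h

theorem inv_K2 {m : MCfg} {X : List Gm} (h : encM m = .K2 :: X) :
    ∃ as k v, m = .ret (.cons₂ as k) v ∧ encL as ++ .sc :: (encK k ++ .R :: encL v) = X := by
  cases m with
  | nrm c k v => simp [encM] at h
  | ret k v =>
    cases k <;> simp [encM, encK] at h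
    exact ⟨_, _, v, rfl, h⟩
  | hlt => simp [encM] at h

theorem inv_K3 {m : MCfg} {c : Code} {X : List Gm} (h : encM m = .K3 c :: X) :
    ∃ k v, m = .ret (.comp c k) v ∧ encK k ++ .R :: encL v = X := by
  cases m with
  | nrm c k v => simp [encM] at h
  | ret k v =>
    cases k <;> simp [encM, encK] at h
    exact ⟨_, v, by rw [h.1], h.2⟩
  | hlt => simp [encM] at h

theorem inv_K4 {m : MCfg} {c : Code} {X : List Gm} (h : encM m = .K4 c :: X) :
    ∃ k v, m = .ret (.fix c k) v ∧ encK k ++ .R :: encL v = X := by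
  cases m with
  | nrm c k v => simp [encM] at h
  | ret k v =>
    cases k <;> simp [encM, encK] at h
    exact ⟨_, v, by rw [h.1], h.2⟩
  | hlt => simp [encM] at h

/-- Letter item of a pattern. -/
abbrev lr (g : Gm) : Gm ⊕ ℕ := Sum.inl g
/-- Variable item of a pattern. -/
abbrev vi (j : ℕ) : Gm ⊕ ℕ := Sum.inr j

/-- Rules for `nrm` configurations. -/
def nrules : Code → List (LPat Gm × LPat Gm)
  | .zero' => [([lr (.N .zero'), vi 0, lr .R, vi 1], [vi 0, lr .R, lr .cm, vi 1])]
  | .succ => [([lr (.N .succ), vi 0, lr .R], [vi 0, lr .R, lr .S, lr .cm]),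
      ([lr (.N .succ), vi 0, lr .R, vi 2, lr .cm, vi 1], [vi 0, lr .R, lr .S, vi 2, lr .cm])]
  | .tail => [([lr (.N .tail), vi 0, lr .R], [vi 0, lr .R]),
      ([lr (.N .tail), vi 0, lr .R, vi 2, lr .cm, vi 1], [vi 0, lr .R, vi 1])]
  | .cons f fs => [([lr (.N (.cons f fs)), vi 0, lr .R, vi 1],
      [lr (.N f), lr (.K1 fs), vi 1, lr .sc, vi 0, lr .R, vi 1])]
  | .comp f g => [([lr (.N (.comp f g)), vi 4], [lr (.N g), lr (.K3 f), vi 4])]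
  | .case f g => [([lr (.N (.case f g)), vi 0, lr .R], [lr (.N f), vi 0, lr .R]),
      ([lr (.N (.case f g)), vi 0, lr .R, lr .cm, vi 1], [lr (.N f), vi 0, lr .R, vi 1]),
      ([lr (.N (.case f g)), vi 0, lr .R, lr .S, vi 1], [lr (.N g), vi 0, lr .R, vi 1])]
  | .fix f => [([lr (.N (.fix f)), vi 4], [lr (.N f), lr (.K4 f), vi 4])]

/-- Rules for `ret` configurations mentioning a code. -/
def krules (c : Code) : List (LPat Gm × LPat Gm) :=
  [([lr (.K1 c), vi 3, lr .sc, vi 0, lr .R, vi 1],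
      [lr (.N c), lr .K2, vi 1, lr .sc, vi 0, lr .R, vi 3]),
    ([lr (.K3 c), vi 4], [lr (.N c), vi 4]),
    ([lr (.K4 c), vi 0, lr .R], [vi 0, lr .R]),
    ([lr (.K4 c), vi 0, lr .R, lr .cm, vi 1], [vi 0, lr .R, vi 1]),
    ([lr (.K4 c), vi 0, lr .R, lr .S, vi 2, lr .cm, vi 1],
      [lr (.N c), lr (.K4 c), vi 0, lr .R, vi 1])]

/-- Code independent rules. -/
def frules : List (LPat Gm × LPat Gm) :=
  [([lr .H, lr .R, vi 1], [lr .HALT]),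
    ([lr .K2, lr .sc, vi 0, lr .R, vi 1], [vi 0, lr .R, lr .cm, vi 1]),
    ([lr .K2, vi 2, lr .cm, vi 3, lr .sc, vi 0, lr .R, vi 1], [vi 0, lr .R, vi 2, lr .cm, vi 1])]

/-- All rules. -/
def mrules (c0 : Code) : List (LPat Gm × LPat Gm) :=
  frules ++ (subs c0).flatMap (fun c => nrules c ++ krules c)

theorem mem_mrules {c0 : Code} {r : LPat Gm × LPat Gm} (h : r ∈ mrules c0) :
    r ∈ frules ∨ ∃ c ∈ subs c0, r ∈ nrules c ∨ r ∈ krules c := by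
  simpa [mrules] using h

theorem mr_n {c0 c : Code} {r : LPat Gm × LPat Gm} (hc : c ∈ subs c0) (h : r ∈ nrules c) :
    r ∈ mrules c0 := by
  simp only [mrules, List.mem_append, List.mem_flatMap]
  exact Or.inr ⟨c, hc, Or.inl h⟩

theorem mr_k {c0 c : Code} {r : LPat Gm × LPat Gm} (hc : c ∈ subs c0) (h : r ∈ krules c) :
    r ∈ mrules c0 := by
  simp only [mrules, List.mem_append, List.mem_flatMap]
  exact Or.inr ⟨c, hc, Or.inr h⟩

theorem mr_f {c0 : Code} {r : LPat Gm × LPat Gm} (h : r ∈ frules) :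
    r ∈ mrules c0 := by
  simp only [mrules, List.mem_append]
  exact Or.inl h

theorem m_hv1 (c0 : Code) : ∀ r ∈ mrules c0, ∀ x, Sum.inr x ∈ r.1 → x < 8 := by
  intro r hr x hx
  rcases mem_mrules hr with h | ⟨c, hc, h | h⟩
  · simp only [frules, List.mem_cons, List.not_mem_nil, or_false] at h
    rcases h with rfl | rfl | rfl <;> simp at hx <;> omega
  · cases c <;> simp only [nrules, List.mem_cons, List.not_mem_nil, or_false] at h <;>
      rcases h with rfl | rfl | rfl <;> simp at hx <;> omega
  · simp only [krules, List.mem_cons, List.not_mem_nil, or_false] at h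
    rcases h with rfl | rfl | rfl | rfl | rfl <;> simp at hx <;> omega

theorem m_hv2 (c0 : Code) : ∀ r ∈ mrules c0, ∀ x, Sum.inr x ∈ r.2 → x < 8 := by
  intro r hr x hx
  rcases mem_mrules hr with h | ⟨c, hc, h | h⟩
  · simp only [frules, List.mem_cons, List.not_mem_nil, or_false] at h
    rcases h with rfl | rfl | rfl <;> simp at hx <;> omega
  · cases c <;> simp only [nrules, List.mem_cons, List.not_mem_nil, or_false] at h <;>
      rcases h with rfl | rfl | rfl <;> simp at hx <;> omega
  · simp only [krules, List.mem_cons, List.not_mem_nil, or_false] at h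
    rcases h with rfl | rfl | rfl | rfl | rfl <;> simp at hx <;> omega

theorem m_hsh1 (c0 : Code) : ∀ r ∈ mrules c0, Sum.inl Gm.sh ∉ r.1 := by
  intro r hr hx
  rcases mem_mrules hr with h | ⟨c, hc, h | h⟩
  · simp only [frules, List.mem_cons, List.not_mem_nil, or_false] at h
    rcases h with rfl | rfl | rfl <;> simp at hx
  · cases c <;> simp only [nrules, List.mem_cons, List.not_mem_nil, or_false] at h <;>
      rcases h with rfl | rfl | rfl <;> simp at hx
  · simp only [krules, List.mem_cons, List.not_mem_nil, or_false] at h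
    rcases h with rfl | rfl | rfl | rfl | rfl <;> simp at hx

theorem m_hlet (c0 : Code) : ∀ r ∈ mrules c0, ∀ g, Sum.inl g ∈ r.2 → g ∈ Alph c0 := by
  intro r hr g hx
  rw [mem_Alph]
  rcases mem_mrules hr with h | ⟨c, hc, h | h⟩
  · simp only [frules, List.mem_cons, List.not_mem_nil, or_false] at h
    rcases h with rfl | rfl | rfl <;> simp at hx <;> (try rcases hx with rfl | rfl | rfl) <;>
      simp_all
  · have hs : ∀ d ∈ subs c, d ∈ subs c0 := fun d hd => subs_trans hc hd
    clear hc hr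
    cases c <;> simp only [nrules, List.mem_cons, List.not_mem_nil, or_false] at h <;>
      rcases h with rfl | rfl | rfl <;> simp at hx <;>
      (try rcases hx with rfl | rfl | rfl | rfl) <;>
      simp [subs] at hs ⊢ <;> first | trivial | exact hs.2 _ (Or.inl (subs_self _)) |
        exact hs.2 _ (Or.inr (subs_self _)) | exact hs.2 _ (subs_self _)
  · simp only [krules, List.mem_cons, List.not_mem_nil, or_false] at h
    rcases h with rfl | rfl | rfl | rfl | rfl <;> simp at hx <;>
      (try rcases hx with rfl | rfl | rfl | rfl) <;> simp_all

end Machine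

section Machine2

open Turing.ToPartrec

theorem m_hsound (c0 : Code) : ∀ m, ∀ r ∈ mrules c0, ∀ σ, Typed (Alph c0) DD σ →
    encM m = lsub σ r.1 → ∃ m', mstep m = some m' ∧ encM m' = lsub σ r.2 := by
  intro m r hr σ hσ he
  have h0 : Gm.R ∉ σ 0 := fun h => by simpa [DD] using (hσ 0 _ h).2
  have h2 : ∀ g ∈ σ 2, g = Gm.S := fun g h => by simpa [DD] using (hσ 2 _ h).2
  have h3 : Gm.sc ∉ σ 3 := fun h => by simpa [DD] using (hσ 3 _ h).2
  have h2c : Gm.sc ∉ σ 2 := fun h => by simpa using h2 _ h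
  have hL : ∀ v, Gm.sc ∉ encL v := fun v h => by simpa using mem_encL h
  rcases mem_mrules hr with h | ⟨c, hc, h | h⟩
  · simp only [frules, List.mem_cons, List.not_mem_nil, or_false] at h
    rcases h with rfl | rfl | rfl
    · simp at he
      obtain ⟨v, rfl⟩ := inv_H he
      exact ⟨.hlt, rfl, by simp [encM]⟩
    · simp at he
      obtain ⟨as, k, v, rfl, e⟩ := inv_K2 he
      obtain ⟨e1, e2⟩ := split_unique (b := []) (hL as) (by simp) e
      obtain ⟨e3, e4⟩ := kR_split h0 e2
      have := encL_nil e1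
      subst this
      exact ⟨_, rfl, by simp [encM, e3, e4, encL]⟩
    · simp at he
      obtain ⟨as, k, v, rfl, e⟩ := inv_K2 he
      obtain ⟨e1, e2⟩ := split_unique (b := σ 2 ++ Gm.cm :: σ 3) (hL as) (by simp [h2c, h3])
        (by simpa using e)
      obtain ⟨e3, e4⟩ := kR_split h0 e2
      obtain ⟨i, v', rfl, e5, e6⟩ := encL_n h2 e1
      exact ⟨_, rfl, by simp [encM, e3, e4, e5, encL]⟩
  · cases c <;> simp only [nrules, List.mem_cons, List.not_mem_nil, or_false] at h
    case zero' =>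
      subst h
      simp at he
      obtain ⟨k, v, rfl, e⟩ := inv_N he
      obtain ⟨e3, e4⟩ := kR_split h0 e
      exact ⟨_, rfl, by simp [encM, e3, e4, encL]⟩
    case succ =>
      rcases h with rfl | rfl
      · simp at he
        obtain ⟨k, v, rfl, e⟩ := inv_N he
        obtain ⟨e3, e4⟩ := kR_split h0 e
        have := encL_nil e4.symm
        subst this
        exact ⟨_, rfl, by simp [encM, e3, encL]⟩
      · simp at he
        obtain ⟨k, v, rfl, e⟩ := inv_N he
        obtain ⟨e3, e4⟩ := kR_split h0 e
        obtain ⟨i, v', rfl, e5, e6⟩ := encL_n h2 e4.symm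
        exact ⟨_, rfl, by simp [encM, e3, e5, encL, List.replicate_succ]⟩
    case tail =>
      rcases h with rfl | rfl
      · simp at he
        obtain ⟨k, v, rfl, e⟩ := inv_N he
        obtain ⟨e3, e4⟩ := kR_split h0 e
        have := encL_nil e4.symm
        subst this
        exact ⟨_, rfl, by simp [encM, e3, encL]⟩
      · simp at he
        obtain ⟨k, v, rfl, e⟩ := inv_N he
        obtain ⟨e3, e4⟩ := kR_split h0 e
        obtain ⟨i, v', rfl, e5, e6⟩ := encL_n h2 e4.symm
        exact ⟨_, rfl, by simp [encM, e3, e6]⟩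
    case cons f fs =>
      subst h
      simp at he
      obtain ⟨k, v, rfl, e⟩ := inv_N he
      obtain ⟨e3, e4⟩ := kR_split h0 e
      exact ⟨_, rfl, by simp [encM, e3, e4, encK]⟩
    case comp f g =>
      subst h
      simp at he
      obtain ⟨k, v, rfl, e⟩ := inv_N he
      exact ⟨_, rfl, by simp [encM, ← e, encK]⟩
    case case f g =>
      rcases h with rfl | rfl | rfl
      · simp at he
        obtain ⟨k, v, rfl, e⟩ := inv_N he
        obtain ⟨e3, e4⟩ := kR_split h0 e
        have := encL_nil e4.symm
        subst this
        exact ⟨_, rfl, by simp [encM, e3, encL]⟩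
      · simp at he
        obtain ⟨k, v, rfl, e⟩ := inv_N he
        obtain ⟨e3, e4⟩ := kR_split h0 e
        obtain ⟨v', rfl, e6⟩ := encL_cm e4.symm
        exact ⟨_, rfl, by simp [encM, e3, e6]⟩
      · simp at he
        obtain ⟨k, v, rfl, e⟩ := inv_N he
        obtain ⟨e3, e4⟩ := kR_split h0 e
        obtain ⟨i, v', rfl, e6⟩ := encL_S e4.symm
        exact ⟨_, rfl, by simp [encM, e3, e6]⟩
    case fix f =>
      subst h
      simp at he
      obtain ⟨k, v, rfl, e⟩ := inv_N he
      exact ⟨_, rfl, by simp [encM, ← e, encK]⟩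
  · simp only [krules, List.mem_cons, List.not_mem_nil, or_false] at h
    rcases h with rfl | rfl | rfl | rfl | rfl
    · simp at he
      obtain ⟨as, k, v, rfl, e⟩ := inv_K1 he
      obtain ⟨e1, e2⟩ := split_unique (hL as) h3 e
      obtain ⟨e3, e4⟩ := kR_split h0 e2
      exact ⟨_, rfl, by simp [encM, e3, e4, ← e1, encK]⟩
    · simp at he
      obtain ⟨k, v, rfl, e⟩ := inv_K3 he
      exact ⟨_, rfl, by simp [encM, ← e]⟩
    · simp at he
      obtain ⟨k, v, rfl, e⟩ := inv_K4 he
      obtain ⟨e3, e4⟩ := kR_split h0 e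
      have := encL_nil e4.symm
      subst this
      exact ⟨_, rfl, by simp [encM, e3, encL]⟩
    · simp at he
      obtain ⟨k, v, rfl, e⟩ := inv_K4 he
      obtain ⟨e3, e4⟩ := kR_split h0 e
      obtain ⟨v', rfl, e6⟩ := encL_cm e4.symm
      exact ⟨_, rfl, by simp [encM, e3, e6]⟩
    · simp at he
      obtain ⟨k, v, rfl, e⟩ := inv_K4 he
      obtain ⟨e3, e4⟩ := kR_split h0 e
      obtain ⟨i, v', rfl, e6⟩ := encL_S e4.symm
      obtain ⟨i', v'', e7, e5, e8⟩ := encL_n h2 e6.symm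
      cases e7
      exact ⟨_, rfl, by simp [encM, e3, encK, e8]⟩

/-- A substitution given by its values on the five used variables. -/
def asg (k t n a z : List Gm) : ℕ → List Gm
  | 0 => k
  | 1 => t
  | 2 => n
  | 3 => a
  | 4 => z
  | _ => []

theorem typed_asg (c0 : Code) {k t n a z : List Gm} (hk : ∀ g ∈ k, g ∈ Alph c0 ∧ g ≠ .R ∧ g ≠ .sh)
    (ht : ∀ g ∈ t, g = .S ∨ g = .cm) (hn : ∀ g ∈ n, g = Gm.S) (ha : ∀ g ∈ a, g = .S ∨ g = .cm)
    (hz : ∀ g ∈ z, g ∈ Alph c0 ∧ g ≠ .sh) : Typed (Alph c0) DD (asg k t n a z) := by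
  intro j g hg
  match j with
  | 0 => exact ⟨(hk g hg).1, (hk g hg).2⟩
  | 1 =>
    refine ⟨?_, ht g hg⟩
    rcases ht g hg with rfl | rfl <;> simp
  | 2 =>
    refine ⟨?_, hn g hg⟩
    rw [hn g hg]; simp
  | 3 =>
    refine ⟨?_, ha g hg⟩
    rcases ha g hg with rfl | rfl <;> simp
  | 4 => exact hz g hg
  | (j + 5) => simp [asg] at hg

theorem m_hcomp (c0 : Code) : ∀ m m', (∀ g ∈ encM m, g ∈ Alph c0) → mstep m = some m' →
    ∃ r ∈ mrules c0, ∃ σ, Typed (Alph c0) DD σ ∧ encM m = lsub σ r.1 ∧ encM m' = lsub σ r.2 := by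
  intro m m' hg hs
  have hS : ∀ n, ∀ g ∈ List.replicate n Gm.S, g = Gm.S := fun n g h => List.eq_of_mem_replicate h
  have hL : ∀ v, ∀ g ∈ encL v, g = .S ∨ g = .cm := fun v g h => mem_encL h
  have hK : ∀ k, (∀ g ∈ encK k, g ∈ Alph c0) → ∀ g ∈ encK k, g ∈ Alph c0 ∧ g ≠ .R ∧ g ≠ .sh :=
    fun k hk g h => ⟨hk g h, (mem_encK h).1, (mem_encK h).2.1⟩
  have hZ : ∀ k v, (∀ g ∈ encK k, g ∈ Alph c0) →
      ∀ g ∈ encK k ++ Gm.R :: encL v, g ∈ Alph c0 ∧ g ≠ .sh := by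
    intro k v hk g h
    simp only [List.mem_append, List.mem_cons] at h
    rcases h with h | rfl | h
    · exact ⟨hk g h, (mem_encK h).2.1⟩
    · simp
    · rcases hL v g h with rfl | rfl <;> simp
  have nil1 : ∀ g ∈ ([] : List Gm), g = .S ∨ g = .cm := by simp
  have nil2 : ∀ g ∈ ([] : List Gm), g = .S := by simp
  have nil3 : ∀ g ∈ ([] : List Gm), g ∈ Alph c0 ∧ g ≠ .sh := by simp
  have nil4 : ∀ g ∈ ([] : List Gm), g ∈ Alph c0 ∧ g ≠ .R ∧ g ≠ .sh := by simp
  cases m with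
  | hlt => simp [mstep] at hs
  | nrm c k v =>
    have hc : c ∈ subs c0 := by simpa using hg (.N c) (by simp [encM])
    have hk : ∀ g ∈ encK k, g ∈ Alph c0 := fun g h => hg g (by simp [encM, h])
    cases c with
    | zero' =>
      cases hs
      exact ⟨_, mr_n hc (by simp only [nrules]; exact List.mem_cons_self),
        asg (encK k) (encL v) [] [] [], typed_asg c0 (hK k hk) (hL v) nil2 nil1 nil3,
        by simp [encM, asg], by simp [encM, asg, encL]⟩
    | succ =>
      cases v with
      | nil =>
        cases hs
        exact ⟨_, mr_n hc (by simp only [nrules]; exact List.mem_cons_self),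
          asg (encK k) [] [] [] [], typed_asg c0 (hK k hk) nil1 nil2 nil1 nil3,
          by simp [encM, asg, encL], by simp [encM, asg, encL]⟩
      | cons n v =>
        cases hs
        exact ⟨_, mr_n hc (by simp only [nrules]; exact List.mem_cons_of_mem _ List.mem_cons_self),
          asg (encK k) (encL v) (List.replicate n .S) [] [],
          typed_asg c0 (hK k hk) (hL v) (hS n) nil1 nil3,
          by simp [encM, asg, encL], by simp [encM, asg, encL, List.replicate_succ]⟩
    | tail =>
      cases v with
      | nil =>
        cases hs
        exact ⟨_, mr_n hc (by simp only [nrules]; exact List.mem_cons_self),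
          asg (encK k) [] [] [] [], typed_asg c0 (hK k hk) nil1 nil2 nil1 nil3,
          by simp [encM, asg, encL], by simp [encM, asg, encL]⟩
      | cons n v =>
        cases hs
        exact ⟨_, mr_n hc (by simp only [nrules]; exact List.mem_cons_of_mem _ List.mem_cons_self),
          asg (encK k) (encL v) (List.replicate n .S) [] [],
          typed_asg c0 (hK k hk) (hL v) (hS n) nil1 nil3,
          by simp [encM, asg, encL], by simp [encM, asg]⟩
    | cons f fs =>
      cases hs
      exact ⟨_, mr_n hc (by simp only [nrules]; exact List.mem_cons_self),
        asg (encK k) (encL v) [] [] [], typed_asg c0 (hK k hk) (hL v) nil2 nil1 nil3,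
        by simp [encM, asg], by simp [encM, asg, encK]⟩
    | comp f g =>
      cases hs
      exact ⟨_, mr_n hc (by simp only [nrules]; exact List.mem_cons_self),
        asg [] [] [] [] (encK k ++ .R :: encL v), typed_asg c0 nil4 nil1 nil2 nil1 (hZ k v hk),
        by simp [encM, asg], by simp [encM, asg, encK]⟩
    | case f g =>
      match v with
      | [] =>
        cases hs
        exact ⟨_, mr_n hc (by simp only [nrules]; exact List.mem_cons_self),
          asg (encK k) [] [] [] [], typed_asg c0 (hK k hk) nil1 nil2 nil1 nil3,
          by simp [encM, asg, encL], by simp [encM, asg, encL]⟩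
      | 0 :: v =>
        cases hs
        exact ⟨_, mr_n hc (by simp only [nrules]; exact List.mem_cons_of_mem _ List.mem_cons_self),
          asg (encK k) (encL v) [] [] [],
          typed_asg c0 (hK k hk) (hL v) nil2 nil1 nil3,
          by simp [encM, asg, encL], by simp [encM, asg]⟩
      | (n + 1) :: v =>
        cases hs
        exact ⟨_, mr_n hc (by
            simp only [nrules]
            exact List.mem_cons_of_mem _ (List.mem_cons_of_mem _ List.mem_cons_self)),
          asg (encK k) (encL (n :: v)) [] [] [],
          typed_asg c0 (hK k hk) (hL _) nil2 nil1 nil3,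
          by simp [encM, asg, encL, List.replicate_succ], by simp [encM, asg]⟩
    | fix f =>
      cases hs
      exact ⟨_, mr_n hc (by simp only [nrules]; exact List.mem_cons_self),
        asg [] [] [] [] (encK k ++ .R :: encL v), typed_asg c0 nil4 nil1 nil2 nil1 (hZ k v hk),
        by simp [encM, asg], by simp [encM, asg, encK]⟩
  | ret k v =>
    cases k with
    | halt =>
      cases hs
      exact ⟨_, mr_f (by simp only [frules]; exact List.mem_cons_self),
        asg [] (encL v) [] [] [], typed_asg c0 nil4 (hL v) nil2 nil1 nil3,
        by simp [encM, asg, encK], by simp [encM]⟩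
    | cons₁ fs as k =>
      have hc : fs ∈ subs c0 := by simpa using hg (.K1 fs) (by simp [encM, encK])
      have hk : ∀ g ∈ encK k, g ∈ Alph c0 := fun g h => hg g (by simp [encM, encK, h])
      cases hs
      exact ⟨_, mr_k hc (by simp only [krules]; exact List.mem_cons_self),
        asg (encK k) (encL v) [] (encL as) [], typed_asg c0 (hK k hk) (hL v) nil2 (hL as) nil3,
        by simp [encM, asg, encK], by simp [encM, asg, encK]⟩
    | cons₂ ns k =>
      have hk : ∀ g ∈ encK k, g ∈ Alph c0 := fun g h => hg g (by simp [encM, encK, h])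
      cases ns with
      | nil =>
        cases hs
        exact ⟨_, mr_f (by simp only [frules]; exact List.mem_cons_of_mem _ List.mem_cons_self),
          asg (encK k) (encL v) [] [] [], typed_asg c0 (hK k hk) (hL v) nil2 nil1 nil3,
          by simp [encM, asg, encK, encL], by simp [encM, asg, encL]⟩
      | cons n ns =>
        cases hs
        exact ⟨_, mr_f (by
            simp only [frules]
            exact List.mem_cons_of_mem _ (List.mem_cons_of_mem _ List.mem_cons_self)),
          asg (encK k) (encL v) (List.replicate n .S) (encL ns) [],
          typed_asg c0 (hK k hk) (hL v) (hS n) (hL ns) nil3,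
          by simp [encM, asg, encK, encL], by simp [encM, asg, encL]⟩
    | comp f k =>
      have hc : f ∈ subs c0 := by simpa using hg (.K3 f) (by simp [encM, encK])
      have hk : ∀ g ∈ encK k, g ∈ Alph c0 := fun g h => hg g (by simp [encM, encK, h])
      cases hs
      exact ⟨_, mr_k hc (by simp only [krules]; exact List.mem_cons_of_mem _ List.mem_cons_self),
        asg [] [] [] [] (encK k ++ .R :: encL v), typed_asg c0 nil4 nil1 nil2 nil1 (hZ k v hk),
        by simp [encM, asg, encK], by simp [encM, asg]⟩
    | fix f k =>
      have hc : f ∈ subs c0 := by simpa using hg (.K4 f) (by simp [encM, encK])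
      have hk : ∀ g ∈ encK k, g ∈ Alph c0 := fun g h => hg g (by simp [encM, encK, h])
      match v with
      | [] =>
        cases hs
        exact ⟨_, mr_k hc (by
            simp only [krules]
            exact List.mem_cons_of_mem _ (List.mem_cons_of_mem _ List.mem_cons_self)),
          asg (encK k) [] [] [] [], typed_asg c0 (hK k hk) nil1 nil2 nil1 nil3,
          by simp [encM, encK, asg, encL], by simp [encM, asg, encL]⟩
      | 0 :: v =>
        cases hs
        exact ⟨_, mr_k hc (by
            simp only [krules]
            exact List.mem_cons_of_mem _ (List.mem_cons_of_mem _
              (List.mem_cons_of_mem _ List.mem_cons_self))),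
          asg (encK k) (encL v) [] [] [],
          typed_asg c0 (hK k hk) (hL v) nil2 nil1 nil3,
          by simp [encM, encK, asg, encL], by simp [encM, asg]⟩
      | (n + 1) :: v =>
        cases hs
        exact ⟨_, mr_k hc (by
            simp only [krules]
            exact List.mem_cons_of_mem _ (List.mem_cons_of_mem _
              (List.mem_cons_of_mem _ (List.mem_cons_of_mem _ List.mem_cons_self)))),
          asg (encK k) (encL v) (List.replicate n .S) [] [],
          typed_asg c0 (hK k hk) (hL _) (hS n) nil1 nil3,
          by simp [encM, encK, asg, encL, List.replicate_succ], by simp [encM, encK, asg]⟩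

theorem encM_mem {m : MCfg} {g : Gm} (h : g ∈ encM m) : g ≠ .sh ∧ (g = .HALT → m = .hlt) := by
  cases m with
  | hlt => simp [encM] at h; subst h; simp
  | nrm c k v =>
    simp only [encM, List.mem_cons, List.mem_append] at h
    rcases h with rfl | h | rfl | h
    · simp
    · exact ⟨(mem_encK h).2.1, fun h' => ((mem_encK h).2.2 h').elim⟩
    · simp
    · rcases mem_encL h with rfl | rfl <;> simp
  | ret k v =>
    simp only [encM, List.mem_cons, List.mem_append] at h
    rcases h with h | rfl | h
    · exact ⟨(mem_encK h).2.1, fun h' => ((mem_encK h).2.2 h').elim⟩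
    · simp
    · rcases mem_encL h with rfl | rfl <;> simp

theorem mstep_none {m : MCfg} (h : mstep m = none) : m = .hlt := by
  unfold mstep at h
  split at h <;> simp at h ⊢

/-- The rewriting system of a program. -/
def msys (c0 : Code) : Sys Gm MCfg where
  enc := encM
  step := mstep
  sh := .sh
  hl := .HALT
  Al := Alph c0
  D := DD
  rules := mrules c0
  hD := fun x g => by simp [DD]
  hD8 := fun g => by simp [DD]
  hD9 := fun g => by simp [DD]
  hDsh := fun j hj => by interval_cases j <;> simp [DD]
  hv1 := m_hv1 c0
  hv2 := m_hv2 c0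
  hsh1 := m_hsh1 c0
  hlet := m_hlet c0
  hcomp := m_hcomp c0
  hsound := m_hsound c0
  hshm := fun m h => (encM_mem h).1 rfl
  hhl1 := fun m h => by rw [mstep_none h]; rfl
  hhl2 := fun m h => by rw [(encM_mem h).2 rfl]; rfl
  hne := by simp
  hshA := by simp

open StateTransition

/-- Image of a Mathlib configuration. -/
def trC : Cfg → MCfg → Prop
  | .halt _, m => m = .hlt
  | .ret k v, m => m = .ret k v

theorem reach_N (c : Code) : ∀ k v, ∃ m, trC (stepNormal c k v) m ∧
    Reaches₁ mstep (.nrm c k v) m := by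
  induction c with
  | zero' => intro k v; exact ⟨_, rfl, Relation.TransGen.single rfl⟩
  | succ => intro k v; cases v <;> exact ⟨_, rfl, Relation.TransGen.single rfl⟩
  | tail => intro k v; exact ⟨_, rfl, Relation.TransGen.single rfl⟩
  | cons f fs ih _ =>
    intro k v
    obtain ⟨m, h1, h2⟩ := ih (.cons₁ fs v k) v
    exact ⟨m, h1, Relation.TransGen.head rfl h2⟩
  | comp f g _ ih =>
    intro k v
    obtain ⟨m, h1, h2⟩ := ih (.comp f k) v
    exact ⟨m, h1, Relation.TransGen.head rfl h2⟩
  | case f g ihf ihg =>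
    intro k v
    match v with
    | [] =>
      obtain ⟨m, h1, h2⟩ := ihf k []
      exact ⟨m, h1, Relation.TransGen.head rfl h2⟩
    | 0 :: v =>
      obtain ⟨m, h1, h2⟩ := ihf k v
      exact ⟨m, h1, Relation.TransGen.head rfl h2⟩
    | (n + 1) :: v =>
      obtain ⟨m, h1, h2⟩ := ihg k (n :: v)
      exact ⟨m, h1, Relation.TransGen.head rfl h2⟩
  | fix f ih =>
    intro k v
    obtain ⟨m, h1, h2⟩ := ih (.fix f k) v
    exact ⟨m, h1, Relation.TransGen.head rfl h2⟩

theorem reach_R (k : Cont) : ∀ v, ∃ m, trC (stepRet k v) m ∧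
    Reaches₁ mstep (.ret k v) m := by
  induction k with
  | halt => intro v; exact ⟨_, rfl, Relation.TransGen.single rfl⟩
  | cons₁ fs as k ih =>
    intro v
    obtain ⟨m, h1, h2⟩ := reach_N fs (.cons₂ v k) as
    exact ⟨m, h1, Relation.TransGen.head rfl h2⟩
  | cons₂ ns k ih =>
    intro v
    cases ns with
    | nil =>
      obtain ⟨m, h1, h2⟩ := ih (0 :: v)
      exact ⟨m, h1, Relation.TransGen.head rfl h2⟩
    | cons n ns =>
      obtain ⟨m, h1, h2⟩ := ih (n :: v)
      exact ⟨m, h1, Relation.TransGen.head rfl h2⟩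
  | comp f k ih =>
    intro v
    obtain ⟨m, h1, h2⟩ := reach_N f k v
    exact ⟨m, h1, Relation.TransGen.head rfl h2⟩
  | fix f k ih =>
    intro v
    match v with
    | [] =>
      obtain ⟨m, h1, h2⟩ := ih []
      exact ⟨m, h1, Relation.TransGen.head rfl h2⟩
    | 0 :: v =>
      obtain ⟨m, h1, h2⟩ := ih v
      exact ⟨m, h1, Relation.TransGen.head rfl h2⟩
    | (n + 1) :: v =>
      obtain ⟨m, h1, h2⟩ := reach_N f (.fix f k) v
      exact ⟨m, h1, Relation.TransGen.head rfl h2⟩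

theorem respects : Respects step mstep trC := by
  intro a b hab
  cases a with
  | halt v => simp only [trC] at hab; subst hab; rfl
  | ret k v =>
    simp only [trC] at hab; subst hab
    exact reach_R k v

theorem halts_iff_eval (m : MCfg) : Halts mstep m ↔ (eval mstep m).Dom := by
  constructor
  · intro h
    induction h with
    | base m h => exact (Part.dom_iff_mem).2 ⟨m, mem_eval.2 ⟨Relation.ReflTransGen.refl, h⟩⟩
    | more m m' h _ ih =>
      rw [reaches_eval (Relation.ReflTransGen.single (show m' ∈ mstep m from h))]
      exact ih
  · intro h
    obtain ⟨b, hb⟩ := Part.dom_iff_mem.1 h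
    obtain ⟨h1, h2⟩ := mem_eval.1 hb
    clear hb h
    induction h1 using Relation.ReflTransGen.head_induction_on with
    | refl => exact Halts.base _ h2
    | head h _ ih => exact Halts.more _ _ h ih

theorem halts_iff (c : Code) (v : List ℕ) :
    Halts mstep (.nrm c .halt v) ↔ (c.eval v).Dom := by
  obtain ⟨m, h1, h2⟩ := reach_N c .halt v
  rw [halts_iff_eval, reaches_eval h2.to_reflTransGen, tr_eval_dom respects h1, stepNormal_eval]
  rfl

end Machine2

section Final

open Turing.ToPartrec

/-- Powers of a regular expression. -/
def powRE (e : RegularExpression Bool) (n : ℕ) : RegularExpression Bool :=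
  n.rec .epsilon (fun _ r => .comp e r)

theorem mem_powRE (g : Gm) (n : ℕ) (w : List Bool) :
    w ∈ (powRE (wordRE (code gnum g)) n).matches' ↔ w = encW gnum (List.replicate n g) := by
  induction n generalizing w with
  | zero => exact mem_eps w
  | succ n ih =>
    show w ∈ (RegularExpression.comp _ (powRE (wordRE (code gnum g)) n)).matches' ↔ _
    rw [mem_comp]
    simp only [ih, mem_wordRE, List.replicate_succ, encW_cons]
    constructor
    · rintro ⟨x, rfl, y, rfl, rfl⟩; rfl
    · rintro rfl; exact ⟨_, rfl, _, rfl, rfl⟩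

/-- The language of candidate histories as a regular expression. -/
def GG (c0 : Code) (n : ℕ) : RegularExpression Bool :=
  .comp (wordRE ([true, true, true, false, true, true, true] ++ encW gnum [.sh, .N c0, .H, .R]))
    (.comp (powRE (wordRE (code gnum .S)) n)
      (.comp (wordRE (encW gnum [.cm, .sh]))
        (.comp (starRE gnum (Alph c0))
          (wordRE (encW gnum [.HALT, .sh] ++ [false, true, true, true])))))

/-- The starting configuration. -/
def st (c0 : Code) (n : ℕ) : MCfg := .nrm c0 .halt [n]

theorem mem_GG (c0 : Code) (n : ℕ) (w : List Bool) :
    w ∈ (GG c0 n).matches' ↔ ∃ u ∈ (msys c0).W (st c0 n), w = wrap gnum u := by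
  have key : ∀ E, wrap gnum ((msys c0).sh :: ((msys c0).enc (st c0 n) ++
      (msys c0).sh :: (E ++ [(msys c0).hl, (msys c0).sh]))) =
      [true, true, true, false, true, true, true] ++ encW gnum [.sh, .N c0, .H, .R] ++
      (encW gnum (List.replicate n .S) ++ (encW gnum [.cm, .sh] ++ (encW gnum E ++
        (encW gnum [.HALT, .sh] ++ [false, true, true, true])))) := by
    intro E
    simp [wrap, msys, st, encM, encK, encL]
  rw [GG, mem_comp]
  simp only [mem_comp, mem_wordRE, mem_powRE, mem_starRE]
  constructor
  · rintro ⟨_, rfl, _, ⟨_, rfl, _, ⟨_, rfl, _, ⟨_, ⟨E, hE, rfl⟩, _, rfl, rfl⟩, rfl⟩, rfl⟩, rfl⟩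
    exact ⟨_, ⟨E, hE, rfl⟩, (key E).symm⟩
  · rintro ⟨_, ⟨E, hE, rfl⟩, rfl⟩
    rw [key]
    exact ⟨_, rfl, _, ⟨_, rfl, _, ⟨_, rfl, _, ⟨_, ⟨E, hE, rfl⟩, _, rfl, rfl⟩, rfl⟩, rfl⟩, rfl⟩

/-- The instance of the equivalence problem. -/
noncomputable def inst (c0 : Code) (n : ℕ) : (Pattern × RegConstraint) × (Pattern × RegConstraint) :=
  ((theP gnum (msys c0).pats, con gnum (msys c0).Al (msys c0).D (msys c0).pats
      (.plus (Y0 gnum (msys c0).Al) (GG c0 n))),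
    (theP gnum (msys c0).pats, con gnum (msys c0).Al (msys c0).D (msys c0).pats
      (Y0 gnum (msys c0).Al)))

theorem inst_iff (c0 : Code) (n : ℕ) :
    LangE (inst c0 n).1.1 (constraintOf (inst c0 n).1.2) =
      LangE (inst c0 n).2.1 (constraintOf (inst c0 n).2.2) ↔ ¬ (c0.eval [n]).Dom := by
  have hst : ∀ g ∈ (msys c0).enc (st c0 n), g ∈ (msys c0).Al := by
    intro g hg
    simp only [msys, st, encM, encK, List.mem_cons, List.mem_append, List.not_mem_nil,
      or_false] at hg ⊢
    rcases hg with rfl | rfl | rfl | hg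
    · simp [subs_self]
    · simp
    · simp
    · rcases mem_encL hg with rfl | rfl <;> simp
  have hhl : (msys c0).hl ∈ (msys c0).Al := by simp [msys]
  have hsh : (msys c0).sh ∈ (msys c0).Al := (msys c0).hshA
  have h1 := lang_eq_iff gnum gnum_inj (msys c0).Al (msys c0).D (msys c0).pats (GG c0 n)
    ((msys c0).W (st c0 n)) (by
      rintro u ⟨E, hE, rfl⟩ g hg
      simp only [List.mem_cons, List.mem_append, List.not_mem_nil, or_false] at hg
      rcases hg with rfl | hg | rfl | hg | rfl | rfl
      · exact hsh
      · exact hst g hg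
      · exact hsh
      · exact hE g hg
      · exact hhl
      · exact hsh) (mem_GG c0 n)
  have h2 := (msys c0).main (st c0 n) hst hhl (by
    show ∃ m', mstep (st c0 n) = some m'
    cases h : mstep (st c0 n) with
    | none => simpa [st] using mstep_none h
    | some m' => exact ⟨m', rfl⟩)
  rw [← halts_iff]
  exact h1.trans h2

theorem encRE_GG (c0 : Code) : Computable (fun n => encRE (GG c0 n)) := by
  have hp : ∀ k : ℕ, Primrec (fun n : ℕ => Nat.pair k n) := fun k =>
    Primrec₂.natPair.comp (Primrec.const k) Primrec.id
  have hpow : ∀ e, Primrec (fun n => encRE (powRE e n)) := by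
    intro e
    have : Primrec (fun n : ℕ => (n.rec (Nat.pair 1 0)
        (fun _ r => Nat.pair 4 (Nat.pair (encRE e) r)) : ℕ)) := by
      refine Primrec.nat_rec₁ (f := fun _ r => Nat.pair 4 (Nat.pair (encRE e) r)) _ ?_
      exact ((hp 4).comp ((hp (encRE e)).comp Primrec.snd)).to₂
    refine this.of_eq ?_
    intro n
    induction n with
    | zero => rfl
    | succ n ih =>
      show Nat.pair 4 (Nat.pair (encRE e) _) = Nat.pair 4 (Nat.pair (encRE e) (encRE (powRE e n)))
      rw [← ih]
  apply Primrec.to_comp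
  have hgen : ∀ e A B, Primrec (fun n => encRE (.comp A (.comp (powRE e n) B))) := by
    intro e A B
    exact (hp 4).comp ((hp (encRE A)).comp ((hp 4).comp
      (Primrec₂.natPair.comp (hpow e) (Primrec.const (encRE B)))))
  exact hgen _ _ _

theorem inst_comp (c0 : Code) : Computable (fun n => encodeInput (inst c0 n)) := by
  have h := encRE_GG c0
  have h3 : Computable (fun n => encRE (.plus (Y0 gnum (msys c0).Al) (GG c0 n))) := by
    refine (Primrec₂.natPair.to_comp.comp (Computable.const 3)
      (Primrec₂.natPair.to_comp.comp (Computable.const (encRE (Y0 gnum (msys c0).Al))) h)).of_eq ?_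
    intro n; rfl
  refine (Computable.encode.comp (Computable.pair (Computable.pair
    (Computable.const (theP gnum (msys c0).pats))
    (Computable.list_cons.comp (Computable.pair (Computable.const 0) h3)
      (Computable.const (((vlist (fullP gnum 0 (msys c0).pats)).map
        (fun v => (v, T gnum (msys c0).Al (msys c0).D v))).map
          (fun q => (q.1, encRE q.2))))))
    (Computable.const ((inst c0 0).2.1, (inst c0 0).2.2.map fun q => (q.1, encRE q.2))))).of_eq ?_
  intro n
  rfl

theorem exists_univ : ∃ c0 : Code, ∀ c : Nat.Partrec.Code,
    ((c0.eval [Encodable.encode c]).Dom ↔ (Nat.Partrec.Code.eval c 0).Dom) := by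
  have h : Partrec (fun n : ℕ => Nat.Partrec.Code.eval (Denumerable.ofNat Nat.Partrec.Code n) 0) :=
    Nat.Partrec.Code.eval_part.comp (Computable.ofNat _) (Computable.const 0)
  obtain ⟨c0, hc⟩ := Code.exists_code (Nat.Partrec'.part_iff₁.2 h)
  refine ⟨c0, fun c => ?_⟩
  have := hc (Encodable.encode c ::ᵥ List.Vector.nil)
  simp only [List.Vector.head_cons, Denumerable.ofNat_encode] at this
  have h2 : (Encodable.encode c ::ᵥ List.Vector.nil : List.Vector ℕ 1).1 = [Encodable.encode c] := rfl
  rw [h2] at this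
  rw [this]
  rfl

theorem undec : ¬ ∃ f : ℕ → Bool, Computable f ∧
      ∀ inp : (Pattern × RegConstraint) × (Pattern × RegConstraint),
        (f (encodeInput inp) = true ↔
          LangE inp.1.1 (constraintOf inp.1.2) = LangE inp.2.1 (constraintOf inp.2.2)) := by
  rintro ⟨f, hf, h⟩
  obtain ⟨c0, hc⟩ := exists_univ
  apply ComputablePred.halting_problem 0
  rw [ComputablePred.computable_iff]
  refine ⟨fun c => !(f (encodeInput (inst c0 (Encodable.encode c)))), ?_, ?_⟩
  · exact Primrec.not.to_comp.comp (hf.comp ((inst_comp c0).comp Computable.encode))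
  · funext c
    have h1 := h (inst c0 (Encodable.encode c))
    rw [inst_iff, hc] at h1
    apply propext
    by_cases hd : (Nat.Partrec.Code.eval c 0).Dom
    · simp only [hd, not_true, iff_false, Bool.not_eq_true] at h1
      simp [hd, h1]
    · simp only [hd, not_false_iff, iff_true] at h1
      simp [hd, h1]

end Final

end EqUndec

/-- The equivalence problem for erasing pattern languages with regular constraints over
the binary alphabet is undecidable. -/
theorem equivalence_EPatternRegConstraints_undecidable :
    ¬ ∃ f : ℕ → Bool, Computable f ∧
      ∀ inp : (Pattern × RegConstraint) × (Pattern × RegConstraint),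
        (f (encodeInput inp) = true ↔
          LangE inp.1.1 (constraintOf inp.1.2) = LangE inp.2.1 (constraintOf inp.2.2)) := by
  exact EqUndec.undec
end

section
/- With α, r_α, β, r_β as in the construction: if h is a substitution that is r_α-valid on α and h(α) ≠ v 0u0 v for every u ∈ Σ* with |u|_{###} = 0, then h(α) ∈ L_E(β, r_β). -/
/-- The word `v = 0###0`. -/
def vWord : List Bin := [false, true, true, true, false]

/-- `u` contains no occurrence of `###` as a factor, i.e. `|u|_{###} = 0`. -/
def NoTripleHash (u : List Bin) : Prop := ¬ ([true, true, true] <:+: u)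

/-- The constraint language of the variable `α₁`:
`{0w0 : w ∈ Σ*, |w|_{###} = 0} ∪ {ε}`. -/
def Ra1 : Set (List Bin) :=
  {w | ∃ u, NoTripleHash u ∧ w = [false] ++ u ++ [false]} ∪ {[]}

/-- The constraint language of the variable `ỹ`:
`Σ* \ { v u v : u ∈ Ra1, u ≠ ε }`. -/
def Ryt : Set (List Bin) :=
  {w | ¬ ∃ u ∈ Ra1, u ≠ [] ∧ w = vWord ++ u ++ vWord}

/-- All the data and assumptions of the construction: the patterns with regular
constraints `(α, r_α)` and `(β, r_β)` built from the predicates `γ₁, …, γ_μ`. -/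
structure Construction where
  /-- the variable `x_v` of `α` -/
  xv : ℕ
  /-- the variable `α₁` of `α` -/
  a1 : ℕ
  /-- the variable `ỹ` of `α` -/
  yt : ℕ
  /-- the number of predicates -/
  μ : ℕ
  /-- the variables `x₁, …, x_μ` of `β` -/
  xs : Fin μ → ℕ
  /-- the terminal-free predicate patterns `γ₁, …, γ_μ` (words over variables) -/
  γ : Fin μ → List ℕ
  /-- the variable `z̃` of `β` -/
  zt : ℕ
  /-- the constraint `r_α` -/
  rα : ℕ → Set (List Bin)
  /-- the constraint `r_β` -/
  rβ : ℕ → Set (List Bin)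
  xv_ne_a1 : xv ≠ a1
  xv_ne_yt : xv ≠ yt
  a1_ne_yt : a1 ≠ yt
  hxv : rα xv = {[], vWord}
  ha1 : rα a1 = Ra1
  hyt : rα yt = Ryt
  xs_inj : Function.Injective xs
  xs_ne_zt : ∀ i, xs i ≠ zt
  xs_fresh : ∀ i, xs i ≠ xv ∧ xs i ≠ a1 ∧ xs i ≠ yt
  zt_fresh : zt ≠ xv ∧ zt ≠ a1 ∧ zt ≠ yt
  γ_disj : ∀ i j, i ≠ j → ∀ x ∈ γ i, x ∉ γ j
  γ_fresh : ∀ i, ∀ x ∈ γ i,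
    (∀ j, x ≠ xs j) ∧ x ≠ zt ∧ x ≠ xv ∧ x ≠ a1 ∧ x ≠ yt
  hrβxs : ∀ i, rβ (xs i) = {[], vWord}
  hrβzt : rβ zt = Ryt
  hrβγ_eps : ∀ i, ∀ x ∈ γ i, [] ∈ rβ x
  hγ_lang : ∀ i, ∀ w ∈ LangE ((γ i).map Sum.inr) rβ,
    w = [] ∨ ∃ u, NoTripleHash u ∧ w = [false] ++ u ++ [false]

/-- The pattern `α = x_v α₁ x_v ỹ`. -/
def Construction.α (C : Construction) : Pattern :=
  [Sum.inr C.xv, Sum.inr C.a1, Sum.inr C.xv, Sum.inr C.yt]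

/-- The pattern `β̂ᵢ = xᵢ γᵢ xᵢ`. -/
def Construction.βhat (C : Construction) (i : Fin C.μ) : Pattern :=
  Sum.inr (C.xs i) :: ((C.γ i).map Sum.inr ++ [Sum.inr (C.xs i)])

/-- The pattern `β = β̂₁ ⋯ β̂_μ z̃`. -/
def Construction.β (C : Construction) : Pattern :=
  (List.ofFn C.βhat).flatten ++ [Sum.inr C.zt]

/-- If `h` is `r_α`-valid on `α` and `h(α)` is not of the form `v 0u0 v` with
`|u|_{###} = 0`, then `h(α) ∈ L_E(β, r_β)`. -/
theorem nonspecial_words_of_alpha_in_beta (C : Construction)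
    (h : ℕ → List Bin) (hvalid : Valid C.rα C.α h)
    (hform : ∀ u : List Bin, NoTripleHash u →
      applySub h C.α ≠ vWord ++ ([false] ++ u ++ [false]) ++ vWord) :
    applySub h C.α ∈ LangE C.β C.rβ := by
  refine ⟨fun x => if x = C.zt then applySub h C.α else [], ?_, ?_⟩
  · intro x hx
    by_cases hz : x = C.zt
    · subst hz
      simp only [if_true]
      rw [C.hrβzt]
      rintro ⟨u, hu, hne, he⟩
      rcases hu with ⟨w, hw, rfl⟩ | hu
      · exact hform w hw he
      · exact hne hu
    · simp only [if_neg hz]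
      have hx' : Sum.inr x ∈ C.β := hx
      simp only [Construction.β, List.mem_append, List.mem_flatten, List.mem_ofFn,
        List.mem_singleton, Sum.inr.injEq, hz, or_false] at hx'
      obtain ⟨l, ⟨i, rfl⟩, hl⟩ := hx'
      simp only [Construction.βhat, List.mem_cons, List.mem_append, List.mem_map,
        Sum.inr.injEq, List.not_mem_nil, or_false, exists_eq_right] at hl
      rcases hl with rfl | hl | rfl
      · rw [C.hrβxs]; exact Or.inl rfl
      · exact C.hrβγ_eps i x hl
      · rw [C.hrβxs]; exact Or.inl rfl
  · generalize applySub h C.α = w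
    have key : ∀ p : Pattern, (∀ c ∈ p, ∃ x, c = Sum.inr x ∧ x ≠ C.zt) →
        applySub (fun x => if x = C.zt then w else []) (p ++ [Sum.inr C.zt]) = w := by
      intro p
      induction p with
      | nil => intro _; simp [applySub]
      | cons c p ih =>
        intro hp
        obtain ⟨x, rfl, hx⟩ := hp c (by simp)
        have := ih (fun d hd => hp d (by simp [hd]))
        simpa [applySub, hx] using this
    apply key
    intro c hc
    simp only [List.mem_flatten, List.mem_ofFn] at hc
    obtain ⟨l, ⟨i, rfl⟩, hl⟩ := hc
    simp only [Construction.βhat, List.mem_cons, List.mem_append, List.mem_map,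
      List.not_mem_nil, or_false] at hl
    rcases hl with rfl | ⟨x, hx, rfl⟩ | rfl
    · exact ⟨_, rfl, C.xs_ne_zt i⟩
    · exact ⟨x, rfl, (C.γ_fresh i x hx).2.1⟩
    · exact ⟨_, rfl, C.xs_ne_zt i⟩
end
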